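/- arXiv:1412.4137 — 4 statements merged into one kernel-verified Lean document; each statement's English description precedes it below -/
import Mathlib

section
/- There is a group isomorphism ψ : G → Γ such that ψ(u) = JR₁J⁻¹, ψ(v) = A₁ and ψ(b) = R₁. -/
/-- Generators of the Cartwright–Steger lattice presentation. -/
inductive CSgen : Type
  | u : CSgen
  | v : CSgen
  | b : CSgen

open FreeGroup in
/-- Relators of the Cartwright–Steger lattice:
`u³ = v⁴ = b³ = 1`, `(uv)² = (vu)²`, `vb = bv`, `(buv)³ = 1`, `(buvu)²v = 1`. -/
def csRels : Set (FreeGroup CSgen) :=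
  { (of CSgen.u) ^ 3,
    (of CSgen.v) ^ 4,
    (of CSgen.b) ^ 3,
    (of CSgen.u * of CSgen.v) ^ 2 * ((of CSgen.v * of CSgen.u) ^ 2)⁻¹,
    of CSgen.v * of CSgen.b * (of CSgen.b * of CSgen.v)⁻¹,
    (of CSgen.b * of CSgen.u * of CSgen.v) ^ 3,
    (of CSgen.b * of CSgen.u * of CSgen.v * of CSgen.u) ^ 2 * of CSgen.v }

/-- The Cartwright–Steger lattice, as an abstract presented group. -/
abbrev CS : Type := PresentedGroup csRels

def gu : CS := PresentedGroup.of CSgen.u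
def gv : CS := PresentedGroup.of CSgen.v
def gb : CS := PresentedGroup.of CSgen.b
/-- `j = (uv)²`. -/
def gj : CS := (gu * gv) ^ 2

/-- Generators of Mostow's group `Γ_{3,4}`. -/
inductive Mgen : Type
  | J : Mgen
  | R1 : Mgen
  | A1 : Mgen

open FreeGroup in
/-- Relators of Mostow's group `Γ_{3,4}`:
`J³ = R₁³ = A₁⁴ = 1`, `A₁ = (JR₁⁻¹J)²`, `A₁R₁ = R₁A₁`. -/
def mostowRels : Set (FreeGroup Mgen) :=
  { (of Mgen.J) ^ 3,
    (of Mgen.R1) ^ 3,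
    (of Mgen.A1) ^ 4,
    of Mgen.A1 * ((of Mgen.J * (of Mgen.R1)⁻¹ * of Mgen.J) ^ 2)⁻¹,
    of Mgen.A1 * of Mgen.R1 * (of Mgen.R1 * of Mgen.A1)⁻¹ }

/-- Mostow's group `Γ_{3,4}`. -/
abbrev Mostow : Type := PresentedGroup mostowRels

def mJ : Mostow := PresentedGroup.of Mgen.J
def mR1 : Mostow := PresentedGroup.of Mgen.R1
def mA1 : Mostow := PresentedGroup.of Mgen.A1

/-!
A homomorphism out of a presented group is a tuple of elements satisfying the relators, so the
theorem says that in every group the triples `(u, v, b)` satisfying the relations of `G` correspond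
bijectively to the triples `(J, R, A)` satisfying those of `Γ`, via `(u, v, b) = (J R J⁻¹, A, R)`
and `J = b u v`.

Two equivalences, valid when `J³ = 1`, give this. The relation `A = (J R⁻¹ J)²` says that
`R (J R J⁻¹) A = J`. For `J = b u v`, the relation `(b u v u)² v = 1` says that `u = J b J⁻¹`,
because `(b u v u)² v` is then the conjugate of `u (J b J⁻¹)⁻¹` by `J`. The remaining relation
`(u v)² = (v u)²` says that `A` commutes with `(u v)² = (R⁻¹ J)² = R⁻¹ (J R⁻¹ J)`; it does, since it
commutes with `R` and is the square of `J R⁻¹ J`.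
-/

section Words

variable {H : Type*} [Group H]

lemma mul_self_eq_inv_of_pow_three_eq_one {g : H} (hg : g ^ 3 = 1) : g * g = g⁻¹ :=
  eq_inv_of_mul_eq_one_left (by rw [← pow_two, ← pow_succ, hg])

lemma mul_conj_mul_eq_iff_eq_sq {J R A : H} (hJ : J ^ 3 = 1) :
    R * (J * R * J⁻¹) * A = J ↔ A = (J * R⁻¹ * J) ^ 2 := by
  have sq_eq : (J * R⁻¹ * J) ^ 2 = (R * (J * R * J⁻¹))⁻¹ * J :=
    calc (J * R⁻¹ * J) ^ 2 = J * R⁻¹ * (J * J) * R⁻¹ * J := by simp only [pow_two, mul_assoc]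
      _ = (R * (J * R * J⁻¹))⁻¹ * J := by rw [mul_self_eq_inv_of_pow_three_eq_one hJ]; group
  rw [sq_eq, eq_inv_mul_iff_mul_eq]

lemma mul_sq_mul_eq_one_iff_eq_conj {u v b : H} (h : (b * u * v) ^ 3 = 1) :
    (b * u * v * u) ^ 2 * v = 1 ↔ u = b * u * v * b * (b * u * v)⁻¹ := by
  set J := b * u * v with hJ
  have uv_eq : u * v = b⁻¹ * J := by rw [hJ]; group
  have eq_conj : (J * u) ^ 2 * v = J * (u * (J * b * J⁻¹)⁻¹) * J⁻¹ :=
    calc (J * u) ^ 2 * v = J * u * J * (u * v) := by simp only [pow_two, mul_assoc]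
      _ = J * (u * (J * b * J⁻¹)⁻¹) * (J * J) := by rw [uv_eq]; group
      _ = J * (u * (J * b * J⁻¹)⁻¹) * J⁻¹ := by rw [mul_self_eq_inv_of_pow_three_eq_one h]
  rw [eq_conj, conj_eq_one_iff, mul_inv_eq_one]

lemma mul_pow_eq_swap_mul_pow_of_commute {M : Type*} [RightCancelMonoid M] {x y : M} {n : ℕ}
    (h : Commute y ((x * y) ^ n)) : (x * y) ^ n = (y * x) ^ n := by
  have semiconj : SemiconjBy y ((x * y) ^ n) ((y * x) ^ n) :=
    SemiconjBy.pow_right (mul_assoc y x y).symm n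
  exact mul_right_cancel (h.eq.symm.trans semiconj.eq)

end Words

/-- The defining relations of the Cartwright–Steger lattice, imposed on elements `u`, `v`, `b` of
an arbitrary group; a homomorphism from `CS` amounts to such a triple. -/
structure IsCSTriple {H : Type*} [Group H] (u v b : H) : Prop where
  u_pow_three : u ^ 3 = 1
  v_pow_four : v ^ 4 = 1
  b_pow_three : b ^ 3 = 1
  uv_sq : (u * v) ^ 2 = (v * u) ^ 2
  v_comm_b : v * b = b * v
  buv_pow_three : (b * u * v) ^ 3 = 1
  buvu_sq_mul_v : (b * u * v * u) ^ 2 * v = 1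

/-- The defining relations of Mostow's group `Γ_{3,4}`, imposed on elements `J`, `R`, `A` of an
arbitrary group; a homomorphism from `Mostow` amounts to such a triple. -/
structure IsMostowTriple {H : Type*} [Group H] (J R A : H) : Prop where
  J_pow_three : J ^ 3 = 1
  R_pow_three : R ^ 3 = 1
  A_pow_four : A ^ 4 = 1
  A_eq : A = (J * R⁻¹ * J) ^ 2
  A_comm_R : A * R = R * A

section Triples

variable {H : Type*} [Group H]

namespace IsMostowTriple

variable {J R A : H}

lemma mul_conj_mul_eq (h : IsMostowTriple J R A) : R * (J * R * J⁻¹) * A = J :=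
  (mul_conj_mul_eq_iff_eq_sq h.J_pow_three).mpr h.A_eq

lemma commute_conj_mul_sq (h : IsMostowTriple J R A) : Commute A ((J * R * J⁻¹ * A) ^ 2) := by
  have conj_mul_eq : J * R * J⁻¹ * A = R⁻¹ * J := by
    rw [eq_inv_mul_iff_mul_eq, ← mul_assoc, h.mul_conj_mul_eq]
  have sq_eq : (J * R * J⁻¹ * A) ^ 2 = R⁻¹ * (J * R⁻¹ * J) := by
    rw [conj_mul_eq]; simp only [pow_two, mul_assoc]
  have commute_root : Commute A (J * R⁻¹ * J) := by
    rw [h.A_eq]; exact Commute.pow_self (J * R⁻¹ * J) 2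
  have commute_R : Commute A R := h.A_comm_R
  rw [sq_eq]
  exact commute_R.inv_right.mul_right commute_root

theorem isCSTriple (h : IsMostowTriple J R A) : IsCSTriple (J * R * J⁻¹) A R where
  u_pow_three := by rw [conj_pow, h.R_pow_three, mul_one, mul_inv_cancel]
  v_pow_four := h.A_pow_four
  b_pow_three := h.R_pow_three
  uv_sq := mul_pow_eq_swap_mul_pow_of_commute h.commute_conj_mul_sq
  v_comm_b := h.A_comm_R
  buv_pow_three := by rw [h.mul_conj_mul_eq, h.J_pow_three]
  buvu_sq_mul_v :=
    (mul_sq_mul_eq_one_iff_eq_conj (by rw [h.mul_conj_mul_eq, h.J_pow_three])).mpr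
      (by rw [h.mul_conj_mul_eq])

end IsMostowTriple

namespace IsCSTriple

variable {u v b : H}

lemma u_eq_conj (h : IsCSTriple u v b) : u = b * u * v * b * (b * u * v)⁻¹ :=
  (mul_sq_mul_eq_one_iff_eq_conj h.buv_pow_three).mp h.buvu_sq_mul_v

theorem isMostowTriple (h : IsCSTriple u v b) : IsMostowTriple (b * u * v) b v where
  J_pow_three := h.buv_pow_three
  R_pow_three := h.b_pow_three
  A_pow_four := h.v_pow_four
  A_eq := (mul_conj_mul_eq_iff_eq_sq h.buv_pow_three).mp (by rw [← h.u_eq_conj])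
  A_comm_R := h.v_comm_b

end IsCSTriple

end Triples

/-- The map from the generators of `CS` with the given values. -/
def CSgen.assign {α : Type*} (u v b : α) : CSgen → α
  | .u => u
  | .v => v
  | .b => b

/-- The map from the generators of `Mostow` with the given values. -/
def Mgen.assign {α : Type*} (J R A : α) : Mgen → α
  | .J => J
  | .R1 => R
  | .A1 => A

lemma lift_presentedGroup_of {α : Type*} (rels : Set (FreeGroup α)) :
    FreeGroup.lift PresentedGroup.of = PresentedGroup.mk rels :=
  FreeGroup.ext_hom _ _ fun _ => FreeGroup.lift_apply_of

section UniversalProperties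

variable {H : Type*} [Group H]

lemma forall_csRels_lift_eq_one_iff {u v b : H} :
    (∀ r ∈ csRels, FreeGroup.lift (CSgen.assign u v b) r = 1) ↔ IsCSTriple u v b := by
  simp only [csRels, Set.forall_mem_insert, Set.mem_singleton_iff, forall_eq, map_mul, map_pow,
    map_inv, FreeGroup.lift_apply_of, CSgen.assign, mul_inv_eq_one]
  exact ⟨fun ⟨hu, hv, hb, huv, hvb, hbuv, hbuvu⟩ => ⟨hu, hv, hb, huv, hvb, hbuv, hbuvu⟩,
    fun ⟨hu, hv, hb, huv, hvb, hbuv, hbuvu⟩ => ⟨hu, hv, hb, huv, hvb, hbuv, hbuvu⟩⟩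

lemma forall_mostowRels_lift_eq_one_iff {J R A : H} :
    (∀ r ∈ mostowRels, FreeGroup.lift (Mgen.assign J R A) r = 1) ↔ IsMostowTriple J R A := by
  simp only [mostowRels, Set.forall_mem_insert, Set.mem_singleton_iff, forall_eq, map_mul, map_pow,
    map_inv, FreeGroup.lift_apply_of, Mgen.assign, mul_inv_eq_one]
  exact ⟨fun ⟨hJ, hR, hA, hAJR, hAR⟩ => ⟨hJ, hR, hA, hAJR, hAR⟩,
    fun ⟨hJ, hR, hA, hAJR, hAR⟩ => ⟨hJ, hR, hA, hAJR, hAR⟩⟩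

lemma isCSTriple_generators : IsCSTriple gu gv gb := by
  have assign_eq_of : CSgen.assign gu gv gb = PresentedGroup.of :=
    funext fun | .u => rfl | .v => rfl | .b => rfl
  rw [← forall_csRels_lift_eq_one_iff, assign_eq_of, lift_presentedGroup_of]
  exact fun r hr => PresentedGroup.one_of_mem hr

lemma isMostowTriple_generators : IsMostowTriple mJ mR1 mA1 := by
  have assign_eq_of : Mgen.assign mJ mR1 mA1 = PresentedGroup.of :=
    funext fun | .J => rfl | .R1 => rfl | .A1 => rfl
  rw [← forall_mostowRels_lift_eq_one_iff, assign_eq_of, lift_presentedGroup_of]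
  exact fun r hr => PresentedGroup.one_of_mem hr

namespace IsCSTriple

variable {u v b : H}

/-- The homomorphism from `CS` sending the generators to a triple that satisfies the relations. -/
def lift (h : IsCSTriple u v b) : CS →* H :=
  PresentedGroup.toGroup (forall_csRels_lift_eq_one_iff.mpr h)

lemma lift_gu (h : IsCSTriple u v b) : h.lift gu = u := PresentedGroup.toGroup.of _

lemma lift_gv (h : IsCSTriple u v b) : h.lift gv = v := PresentedGroup.toGroup.of _

lemma lift_gb (h : IsCSTriple u v b) : h.lift gb = b := PresentedGroup.toGroup.of _

end IsCSTriple

namespace IsMostowTriple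

variable {J R A : H}

/-- The homomorphism from `Mostow` sending the generators to a triple that satisfies the
relations. -/
def lift (h : IsMostowTriple J R A) : Mostow →* H :=
  PresentedGroup.toGroup (forall_mostowRels_lift_eq_one_iff.mpr h)

lemma lift_mJ (h : IsMostowTriple J R A) : h.lift mJ = J := PresentedGroup.toGroup.of _

lemma lift_mR1 (h : IsMostowTriple J R A) : h.lift mR1 = R := PresentedGroup.toGroup.of _

lemma lift_mA1 (h : IsMostowTriple J R A) : h.lift mA1 = A := PresentedGroup.toGroup.of _

end IsMostowTriple

lemma CS.hom_ext {f g : CS →* H} (hu : f gu = g gu) (hv : f gv = g gv) (hb : f gb = g gb) :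
    f = g :=
  PresentedGroup.ext fun | .u => hu | .v => hv | .b => hb

lemma Mostow.hom_ext {f g : Mostow →* H} (hJ : f mJ = g mJ) (hR : f mR1 = g mR1)
    (hA : f mA1 = g mA1) : f = g :=
  PresentedGroup.ext fun | .J => hJ | .R1 => hR | .A1 => hA

end UniversalProperties

/-- The homomorphism `ψ : G → Γ` with `u ↦ J R₁ J⁻¹`, `v ↦ A₁`, `b ↦ R₁`. -/
def csToMostow : CS →* Mostow := isMostowTriple_generators.isCSTriple.lift

/-- The inverse of `csToMostow`, with `J ↦ b u v`, `R₁ ↦ b`, `A₁ ↦ v`. -/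
def mostowToCS : Mostow →* CS := isCSTriple_generators.isMostowTriple.lift

lemma mostowToCS_comp_csToMostow : mostowToCS.comp csToMostow = MonoidHom.id CS := by
  apply CS.hom_ext <;>
    simp only [csToMostow, mostowToCS, MonoidHom.comp_apply, MonoidHom.id_apply,
      IsCSTriple.lift_gu, IsCSTriple.lift_gv, IsCSTriple.lift_gb, map_mul, map_inv,
      IsMostowTriple.lift_mJ, IsMostowTriple.lift_mR1, IsMostowTriple.lift_mA1]
  exact isCSTriple_generators.u_eq_conj.symm

lemma csToMostow_comp_mostowToCS : csToMostow.comp mostowToCS = MonoidHom.id Mostow := by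
  apply Mostow.hom_ext <;>
    simp only [csToMostow, mostowToCS, MonoidHom.comp_apply, MonoidHom.id_apply,
      IsCSTriple.lift_gu, IsCSTriple.lift_gv, IsCSTriple.lift_gb, map_mul,
      IsMostowTriple.lift_mJ, IsMostowTriple.lift_mR1, IsMostowTriple.lift_mA1]
  exact isMostowTriple_generators.mul_conj_mul_eq

/-- there is an isomorphism `ψ : G → Γ` with
`ψ(u) = JR₁J⁻¹`, `ψ(v) = A₁`, `ψ(b) = R₁`. -/
theorem stmt_1 : ∃ ψ : CS ≃* Mostow,
    ψ gu = mJ * mR1 * mJ⁻¹ ∧ ψ gv = mA1 ∧ ψ gb = mR1 :=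
  have h := isMostowTriple_generators.isCSTriple
  ⟨csToMostow.toMulEquiv mostowToCS mostowToCS_comp_csToMostow csToMostow_comp_mostowToCS,
    h.lift_gu, h.lift_gv, h.lift_gb⟩
end

section
/- The group defined by the presentation with generators u, v and relations u³ = v⁴ = 1, (uv)² = (vu)² is finite of order 288. -/
/-- Generators of the presentation. -/
inductive K2gen : Type
  | u : K2gen
  | v : K2gen

open FreeGroup in
/-- Relators `u³ = 1`, `v⁴ = 1`, `(uv)²((vu)²)⁻¹ = 1`. -/
def k288Rels : Set (FreeGroup K2gen) :=
  { (of K2gen.u) ^ 3,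
    (of K2gen.v) ^ 4,
    (of K2gen.u * of K2gen.v) ^ 2 * ((of K2gen.v * of K2gen.u) ^ 2)⁻¹ }

/-- The group presented by `⟨u, v | u³ = v⁴ = 1, (uv)² = (vu)²⟩`. -/
abbrev K288 : Type := PresentedGroup k288Rels

/-!
The relation `(uv)² = (vu)²` makes `z = (uv)²` central, and the order of the group is the product
of the order of `⟨z⟩` and its index.

Modulo `z` the group becomes the rotation group of the octahedron, `⟨u, v | u³ = v⁴ = (uv)² = 1⟩`:
it has at most `6 · 4` elements because the coset of `⟨v⟩` has only six translates, the vertices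
of the octahedron, and at least `24` because it maps onto the symmetric group on the four diagonals.

The half-turn `u v² u⁻¹` inverts `v` modulo `z`; in the group itself it conjugates `v⁻¹ z³` to `v`,
so `z¹² = 1` by comparing fourth powers. That `z` has no smaller order is seen in the complex
reflection group `3[4]4`, where `u` and `v` are plane reflections of orders `3` and `4` and `z` is
scalar.
-/

open Subgroup
open scoped Pointwise

section Closure

variable {G : Type*} [Group G]

theorem surjective_of_forall_smul_mem_range {ι α : Type*} [Finite ι] [Nonempty ι] [MulAction G α]
    [MulAction.IsPretransitive G α] {S : Set G} (hS : closure S = ⊤) {f : ι → α}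
    (hf : ∀ g ∈ S, ∀ i, g • f i ∈ Set.range f) : Function.Surjective f := by
  have hstab : closure S ≤ MulAction.stabilizer G (Set.range f) := by
    refine (closure_le _).2 fun g hg ↦ ?_
    refine (MulAction.mem_stabilizer_set_iff_smul_set_subset (Set.finite_range f)).2 ?_
    rintro _ ⟨_, ⟨i, rfl⟩, rfl⟩
    exact hf g hg i
  intro x
  obtain ⟨i⟩ := ‹Nonempty ι›
  obtain ⟨g, rfl⟩ := MulAction.exists_smul_eq G (f i) x
  have hg : g ∈ closure S := hS ▸ mem_top g
  exact (MulAction.mem_stabilizer_set.1 (hstab hg) (f i)).2 (Set.mem_range_self i)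

theorem mem_center_of_forall_commute {S : Set G} (hS : closure S = ⊤) {z : G}
    (hz : ∀ g ∈ S, Commute z g) : z ∈ center G := by
  rw [← centralizer_univ, ← coe_top, ← hS, centralizer_closure]
  exact mem_centralizer_iff.2 fun g hg ↦ (hz g hg).symm.eq

theorem normal_zpowers_of_mem_center {z : G} (hz : z ∈ center G) : (zpowers z).Normal where
  conj_mem n hn g := by
    rwa [mem_center_iff.1 (zpowers_le.2 hz hn) g, mul_inv_cancel_right]

end Closure

section Relations

variable {G : Type*} [Group G] {u v : G}

theorem commute_mul_sq_left (h : (u * v) ^ 2 = (v * u) ^ 2) : Commute ((u * v) ^ 2) u := by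
  rw [commute_iff_eq, mul_pow_mul, h]

theorem commute_mul_sq_right (h : (u * v) ^ 2 = (v * u) ^ 2) : Commute ((u * v) ^ 2) v := by
  rw [commute_iff_eq, h, mul_pow_mul, h]

theorem mul_eq_inv_mul_inv_mul_sq (h : (u * v) ^ 2 = (v * u) ^ 2) :
    v * u = u⁻¹ * v⁻¹ * (u * v) ^ 2 := by
  rw [h, sq]
  group

theorem conj_eq_inv_mul_mul_sq (hu : u ^ 3 = 1) (h : (u * v) ^ 2 = (v * u) ^ 2) :
    u * v * u⁻¹ = v⁻¹ * u * (u * v) ^ 2 := by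
  have hu_inv : u⁻¹ * u⁻¹ = u := by
    rw [← mul_inv_rev, inv_eq_iff_mul_eq_one, ← pow_three', hu]
  calc u * v * u⁻¹ = v⁻¹ * u⁻¹ * ((u * v) ^ 2 * u⁻¹) := by rw [sq]; group
    _ = v⁻¹ * (u⁻¹ * u⁻¹) * (u * v) ^ 2 := by
      rw [(commute_mul_sq_left h).inv_right.eq]; simp only [mul_assoc]
    _ = v⁻¹ * u * (u * v) ^ 2 := by rw [hu_inv]

theorem semiconjBy_halfTurn (hu : u ^ 3 = 1) (hv : v ^ 4 = 1) (h : (u * v) ^ 2 = (v * u) ^ 2) :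
    SemiconjBy (u * v ^ 2 * u⁻¹) (v⁻¹ * ((u * v) ^ 2) ^ 3) v := by
  have hzu : Commute ((u * v) ^ 2) u := commute_mul_sq_left h
  have hzv : Commute ((u * v) ^ 2) v := commute_mul_sq_right h
  have hvu := mul_eq_inv_mul_inv_mul_sq h
  have hconj := conj_eq_inv_mul_mul_sq hu h
  have hu_inv : u⁻¹ = u * u := inv_eq_of_mul_eq_one_left (by rw [← pow_three', hu])
  have hv_inv : v ^ 3 = v⁻¹ := eq_inv_of_mul_eq_one_left (by rw [← pow_succ, hv])
  generalize (u * v) ^ 2 = z at *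
  calc u * v ^ 2 * u⁻¹ * (v⁻¹ * z ^ 3) = u * v ^ 2 * (u⁻¹ * v⁻¹ * z) * z ^ 2 := by group
    _ = u * v ^ 3 * u * z ^ 2 := by rw [← hvu]; group
    _ = u * (v⁻¹ * u * z) * z := by rw [hv_inv, sq]; simp only [mul_assoc]
    _ = u * u * (v * (u⁻¹ * z)) := by rw [← hconj]; simp only [mul_assoc]
    _ = u⁻¹ * v * (z * u⁻¹) := by rw [hzu.inv_right.eq, ← hu_inv]; simp only [mul_assoc]
    _ = u⁻¹ * v⁻¹ * (v ^ 2 * z) * u⁻¹ := by group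
    _ = u⁻¹ * v⁻¹ * z * v ^ 2 * u⁻¹ := by
      rw [← (hzv.pow_right 2).eq]; simp only [mul_assoc]
    _ = v * (u * v ^ 2 * u⁻¹) := by rw [← hvu]; simp only [mul_assoc]

theorem mul_sq_pow_twelve (hu : u ^ 3 = 1) (hv : v ^ 4 = 1) (h : (u * v) ^ 2 = (v * u) ^ 2) :
    ((u * v) ^ 2) ^ 12 = 1 := by
  have hcomm : Commute v⁻¹ (((u * v) ^ 2) ^ 3) :=
    (commute_mul_sq_right h).symm.inv_left.pow_right 3
  have hpow : (v⁻¹ * ((u * v) ^ 2) ^ 3) ^ 4 = ((u * v) ^ 2) ^ 12 := by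
    rw [hcomm.mul_pow, inv_pow, hv, inv_one, one_mul, ← pow_mul]
  have hconj := (semiconjBy_halfTurn hu hv h).pow_right 4
  rwa [hpow, hv, SemiconjBy, one_mul, mul_eq_left] at hconj

end Relations

section Octahedron

variable {G α : Type*} [Group G] [MulAction G α] {u v : G}

/-- The vertices of an octahedron, given a rotation `u` of order three, a rotation `v` of order four
and a vertex `p` on the axis of `v`: first the face of `p` turned by `u`, then the opposite
face. -/
def octahedronVertex (u v : G) (p : α) : Fin 6 → α :=
  ![p, u • p, u⁻¹ • p, v • u⁻¹ • p, v • v • u⁻¹ • p, u • v • v • u⁻¹ • p]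

theorem smul_octahedronVertex_mem_range (hu : u ^ 3 = 1) (hv : v ^ 4 = 1) (huv : (u * v) ^ 2 = 1)
    {p : α} (hp : v • p = p) :
    ∀ g ∈ ({u, v} : Set G), ∀ i,
      g • octahedronVertex u v p i ∈ Set.range (octahedronVertex u v p) := by
  have h : (u * v) ^ 2 = (v * u) ^ 2 := by
    rw [huv, ← mul_left_cancel_iff (a := u), ← mul_pow_mul, huv, one_mul, mul_one]
  have hp' : v⁻¹ • p = p := inv_smul_eq_iff.2 hp.symm
  have hu_smul (x : α) : u • u • u • x = x := by
    rw [smul_smul, smul_smul, ← pow_three', hu, one_smul]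
  have hv_smul (x : α) : v • v • v • v • x = x := by
    rw [smul_smul, smul_smul, smul_smul, ← pow_three', ← pow_succ, hv, one_smul]
  have hu_up : u • u • p = u⁻¹ • p := by rw [eq_inv_smul_iff, hu_smul]
  have hv_up : v • u • p = u⁻¹ • p := by
    rw [smul_smul, mul_eq_inv_mul_inv_mul_sq h, huv, mul_one, mul_smul, hp']
  have hv_vvup : v • v • v • u⁻¹ • p = u • p := by rw [← hv_up, hv_smul]
  have hu_vup : u • v • u⁻¹ • p = v • v • u⁻¹ • p := by
    rw [smul_smul, smul_smul, conj_eq_inv_mul_mul_sq hu h, huv, mul_one, mul_smul, ← hv_up,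
      inv_smul_eq_iff, hv_smul]
  have hu_antipode : u • u • v • v • u⁻¹ • p = v • u⁻¹ • p := by rw [← hu_vup, hu_smul]
  have hv_antipode : v • u • v • v • u⁻¹ • p = u • v • v • u⁻¹ • p := by
    have hsemi := congrArg (· • p) (semiconjBy_halfTurn hu hv h).eq
    simpa only [huv, one_pow, mul_one, sq, mul_smul, hp'] using hsemi.symm
  rintro g (rfl | rfl) i <;> fin_cases i
  exacts [⟨1, rfl⟩, ⟨2, hu_up.symm⟩, ⟨0, (smul_inv_smul g p).symm⟩, ⟨4, hu_vup.symm⟩, ⟨5, rfl⟩,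
    ⟨3, hu_antipode.symm⟩, ⟨0, hp.symm⟩, ⟨2, hv_up.symm⟩, ⟨3, rfl⟩, ⟨4, rfl⟩, ⟨1, hv_vvup.symm⟩,
    ⟨5, hv_antipode.symm⟩]

theorem index_zpowers_ne_zero_and_le_of_octahedral (hG : closure {u, v} = ⊤)
    (hu : u ^ 3 = 1) (hv : v ^ 4 = 1) (huv : (u * v) ^ 2 = 1) :
    (zpowers v).index ≠ 0 ∧ (zpowers v).index ≤ 6 := by
  have hfix : v • (QuotientGroup.mk 1 : G ⧸ zpowers v) = QuotientGroup.mk 1 := by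
    rw [MulAction.Quotient.smul_mk, QuotientGroup.eq]
    simp
  have hsurj : Function.Surjective (octahedronVertex u v (QuotientGroup.mk 1 : G ⧸ zpowers v)) :=
    surjective_of_forall_smul_mem_range hG (smul_octahedronVertex_mem_range hu hv huv hfix)
  have hfin : Finite (G ⧸ zpowers v) := .of_surjective _ hsurj
  exact ⟨index_ne_zero_of_finite, by simpa [index] using Nat.card_le_card_of_surjective _ hsurj⟩

theorem natCard_ne_zero_and_le_of_octahedral (hG : closure {u, v} = ⊤)
    (hu : u ^ 3 = 1) (hv : v ^ 4 = 1) (huv : (u * v) ^ 2 = 1) :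
    Nat.card G ≠ 0 ∧ Nat.card G ≤ 24 := by
  obtain ⟨hne, hle⟩ := index_zpowers_ne_zero_and_le_of_octahedral hG hu hv huv
  have hord : orderOf v ≤ 4 := orderOf_le_of_pow_eq_one (by norm_num) hv
  have hpos : 0 < orderOf v := Nat.pos_of_dvd_of_pos (orderOf_dvd_of_pow_eq_one hv) (by norm_num)
  rw [← card_mul_index (zpowers v), Nat.card_zpowers]
  exact ⟨mul_ne_zero hpos.ne' hne, Nat.mul_le_mul hord hle⟩

theorem index_zpowers_mul_sq_ne_zero_and_le (hG : closure {u, v} = ⊤) (hu : u ^ 3 = 1)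
    (hv : v ^ 4 = 1) (h : (u * v) ^ 2 = (v * u) ^ 2) :
    (zpowers ((u * v) ^ 2)).index ≠ 0 ∧ (zpowers ((u * v) ^ 2)).index ≤ 24 := by
  have hcenter : (u * v) ^ 2 ∈ center G := by
    refine mem_center_of_forall_commute hG ?_
    rintro g (rfl | rfl)
    exacts [commute_mul_sq_left h, commute_mul_sq_right h]
  have := normal_zpowers_of_mem_center hcenter
  let π := QuotientGroup.mk' (zpowers ((u * v) ^ 2))
  have hgen : closure {π u, π v} = ⊤ := by
    rw [← Set.image_pair, ← MonoidHom.map_closure, hG,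
      map_top_of_surjective π (QuotientGroup.mk'_surjective _)]
  have hπ : (π u * π v) ^ 2 = 1 := by
    rw [← map_mul, ← map_pow]
    exact (QuotientGroup.eq_one_iff _).2 (mem_zpowers _)
  exact natCard_ne_zero_and_le_of_octahedral hgen (by rw [← map_pow, hu, map_one])
    (by rw [← map_pow, hv, map_one]) hπ

end Octahedron

namespace K288

/-- The generator `u` of the presented group. -/
def u : K288 := PresentedGroup.of K2gen.u

/-- The generator `v` of the presented group. -/
def v : K288 := PresentedGroup.of K2gen.v

theorem u_pow_three : u ^ 3 = 1 :=
  PresentedGroup.one_of_mem (rels := k288Rels) (Or.inl rfl)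

theorem v_pow_four : v ^ 4 = 1 :=
  PresentedGroup.one_of_mem (rels := k288Rels) (Or.inr (Or.inl rfl))

theorem mul_sq_comm : (u * v) ^ 2 = (v * u) ^ 2 :=
  mul_inv_eq_one.1 (PresentedGroup.one_of_mem (rels := k288Rels) (Or.inr (Or.inr rfl)))

theorem closure_pair : closure {u, v} = ⊤ := by
  rw [eq_top_iff, ← PresentedGroup.closure_range_of, closure_le]
  rintro _ ⟨_ | _, rfl⟩
  exacts [subset_closure (Or.inl rfl), subset_closure (Or.inr rfl)]

theorem exists_lift {H : Type*} [Group H] {a b : H} (ha : a ^ 3 = 1) (hb : b ^ 4 = 1)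
    (hab : (a * b) ^ 2 = (b * a) ^ 2) : ∃ f : K288 →* H, f u = a ∧ f v = b := by
  let images : K2gen → H := fun g ↦ K2gen.casesOn g a b
  have hrels : ∀ r ∈ k288Rels, FreeGroup.lift images r = 1 := by
    rintro r (rfl | rfl | rfl) <;> simp [images, ha, hb, hab]
  exact ⟨PresentedGroup.toGroup hrels, PresentedGroup.toGroup.of hrels,
    PresentedGroup.toGroup.of hrels⟩

theorem twentyFour_dvd_index_zpowers_mul_sq : 24 ∣ (zpowers ((u * v) ^ 2)).index := by
  -- The four points are the diagonals of the cube; `u v` is the half-turn swapping two of them.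
  obtain ⟨f, hfu, hfv⟩ := exists_lift (a := Equiv.swap (0 : Fin 4) 1 * (finRotate 4)⁻¹)
    (b := finRotate 4) (by decide) (by decide) (by decide)
  have huv : f (u * v) = Equiv.swap 0 1 := by rw [map_mul, hfu, hfv, inv_mul_cancel_right]
  have hsurj : f.range = ⊤ := by
    rw [eq_top_iff, ← Equiv.Perm.closure_cycle_adjacent_swap isCycle_finRotate support_finRotate 0,
      closure_le]
    rintro _ (rfl | rfl)
    exacts [⟨v, hfv⟩, ⟨u * v, huv⟩]
  have hker : zpowers ((u * v) ^ 2) ≤ f.ker := by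
    rw [zpowers_le, MonoidHom.mem_ker, map_pow, huv, sq, Equiv.swap_mul_self]
  have hindex : f.ker.index = 24 := by
    rw [index_ker, hsurj, card_top, Nat.card_perm, Nat.card_fin]
    rfl
  exact hindex ▸ index_dvd_of_le hker

theorem index_zpowers_mul_sq : (zpowers ((u * v) ^ 2)).index = 24 := by
  obtain ⟨hne, hle⟩ :=
    index_zpowers_mul_sq_ne_zero_and_le closure_pair u_pow_three v_pow_four mul_sq_comm
  exact hle.antisymm (Nat.le_of_dvd (Nat.pos_of_ne_zero hne) twentyFour_dvd_index_zpowers_mul_sq)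

/-- The reflection of order three generating, with `reflectionFour`, the reduction modulo `13` of
the complex reflection group `3[4]4`. Its eigenvalues are `1` and the cube root of unity `3`; the
diagonal is chosen so that its product with `reflectionFour` has trace zero, hence a scalar
square. -/
def reflectionThree : Matrix (Fin 2) (Fin 2) (ZMod 13) := !![5, 1; 5, 12]

/-- The reflection of order four in the reduction modulo `13` of `3[4]4`; `5` is a square root of
`-1`. -/
def reflectionFour : Matrix (Fin 2) (Fin 2) (ZMod 13) := !![1, 0; 0, 5]

theorem reflectionThree_pow_three : reflectionThree ^ 3 = 1 := by decide

theorem reflectionFour_pow_four : reflectionFour ^ 4 = 1 := by decide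

theorem reflectionThree_mul_reflectionFour_sq :
    (reflectionThree * reflectionFour) ^ 2 = Matrix.scalar (Fin 2) 11 := by decide

theorem reflectionFour_mul_reflectionThree_sq :
    (reflectionFour * reflectionThree) ^ 2 = Matrix.scalar (Fin 2) 11 := by decide

theorem orderOf_scalar_eleven : orderOf (Matrix.scalar (Fin 2) (11 : ZMod 13)) = 12 := by
  have horder : orderOf (11 : ZMod 13) = 12 := (orderOf_eq_iff (by norm_num)).2 (by decide)
  let scalar : ZMod 13 →* Matrix (Fin 2) (Fin 2) (ZMod 13) := (Matrix.scalar (Fin 2)).toMonoidHom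
  have hinj : Function.Injective scalar := fun _ _ ↦ Matrix.scalar_inj.1
  exact (orderOf_injective scalar hinj 11).trans horder

theorem orderOf_mul_sq : orderOf ((u * v) ^ 2) = 12 := by
  obtain ⟨f, hfu, hfv⟩ := exists_lift
    (a := Units.ofPowEqOne reflectionThree 3 reflectionThree_pow_three (by norm_num))
    (b := Units.ofPowEqOne reflectionFour 4 reflectionFour_pow_four (by norm_num))
    (Units.pow_ofPowEqOne _ _) (Units.pow_ofPowEqOne _ _)
    (Units.ext <| reflectionThree_mul_reflectionFour_sq.trans
      reflectionFour_mul_reflectionThree_sq.symm)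
  have hscalar : (f ((u * v) ^ 2)).val = Matrix.scalar (Fin 2) 11 := by
    rw [map_pow, map_mul, hfu, hfv]
    exact reflectionThree_mul_reflectionFour_sq
  have hdvd : 12 ∣ orderOf ((u * v) ^ 2) := by
    rw [← orderOf_scalar_eleven, ← hscalar, orderOf_units]
    exact orderOf_map_dvd f _
  exact Nat.dvd_antisymm
    (orderOf_dvd_of_pow_eq_one (mul_sq_pow_twelve u_pow_three v_pow_four mul_sq_comm)) hdvd

end K288

/-- this presented group is finite of order 288. -/
theorem stmt_2 : Finite K288 ∧ Nat.card K288 = 288 := by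
  have hcard : Nat.card K288 = 288 := by
    rw [← card_mul_index (zpowers ((K288.u * K288.v) ^ 2)), Nat.card_zpowers,
      K288.orderOf_mul_sq, K288.index_zpowers_mul_sq]
  exact ⟨Nat.finite_of_card_ne_zero (by rw [hcard]; norm_num), hcard⟩
end

section
/- The 864 elements bᵐk, where m ∈ {−1, 0, 1} and k ranges over K, form a complete set of representatives for the cosets of Π in G; that is, every element of G lies in the coset Πbᵐk for exactly one pair (m, k) with m ∈ {−1, 0, 1} and k ∈ K. -/
/-- `a₁ = vuv⁻¹j⁴buvj²`. -/
def a1 : CS := gv * gu * gv⁻¹ * gj ^ 4 * gb * gu * gv * gj ^ 2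
/-- `a₂ = v²ubuv⁻¹uv²j`. -/
def a2 : CS := gv ^ 2 * gu * gb * gu * gv⁻¹ * gu * gv ^ 2 * gj
/-- `a₃ = u⁻¹v²uj⁹bv⁻¹uv⁻¹j⁸`. -/
def a3 : CS := gu⁻¹ * gv ^ 2 * gu * gj ^ 9 * gb * gv⁻¹ * gu * gv⁻¹ * gj ^ 8

/-- The subgroup `Π` generated by `a₁`, `a₂`, `a₃`. -/
def PiGrp : Subgroup CS := Subgroup.closure {a1, a2, a3}

lemma a1_mem : a1 ∈ PiGrp := Subgroup.subset_closure (Set.mem_insert _ _)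
lemma a2_mem : a2 ∈ PiGrp :=
  Subgroup.subset_closure (Set.mem_insert_of_mem _ (Set.mem_insert _ _))
lemma a3_mem : a3 ∈ PiGrp :=
  Subgroup.subset_closure (Set.mem_insert_of_mem _ (Set.mem_insert_of_mem _ (Set.mem_singleton _)))

/-- The subgroup `K` generated by `u` and `v` (finite of order 288). -/
def Kgp : Subgroup CS := Subgroup.closure {gu, gv}

/-!
The proof is a coset enumeration. Explicit permutations of 864 codes satisfy the relations of `G`,
so `G` acts on the codes from the right. Let `t(x)` be the element `bᵐ k` with code `x`. All of `Π`
fixes the code `x₀` of the trivial pair, and `x₀ t(x) = x`, so different codes have different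
cosets.

The elements `t(x)` meet every coset as soon as the Schreier cocycle `c(g, x) = t(x) g t(x g)⁻¹`
takes values in `Π` for each generator `g`. It is trivial on `K`, so only `c(b, x)` matters, and the
relations translate into statements about its values: `vb = bv` says that `c(b, x)` depends only on
the orbit of `x` under `v`, while `(buvu)²v = 1` and `(buv)³ = 1` say that the product of the values
along a cycle of length two or three is trivial. Hence membership in `Π` propagates along these
cycles, and it reaches all 216 orbits from six of them: three where `c(b, x) = 1` and three where
`c(b, x)` is `a₁`, `a₂` or `a₃`.
-/

open scoped RightActions

section SchreierCocycle

variable {G X : Type*} [Group G] [MulAction Gᵐᵒᵖ X] (t : X → G)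

/-- The cocycle `c(g, x) = t(x) g t(x g)⁻¹` of a family `t` of elements indexed by a right `G`-set.
If `t(x)` represents the coset `x` of a subgroup `H`, its values on generators `g` are the
Schreier generators of `H`. -/
def schreierCocycle (g : G) (x : X) : G := t x * g * (t (x <• g))⁻¹

lemma schreierCocycle_one (x : X) : schreierCocycle t 1 x = 1 := by
  simp [schreierCocycle]

lemma schreierCocycle_mul (g h : G) (x : X) :
    schreierCocycle t (g * h) x = schreierCocycle t g x * schreierCocycle t h (x <• g) := by
  simp only [schreierCocycle, op_smul_mul]
  group

lemma schreierCocycle_inv (g : G) (x : X) :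
    schreierCocycle t g⁻¹ x = (schreierCocycle t g (x <• g⁻¹))⁻¹ :=
  eq_inv_of_mul_eq_one_left <| by
    rw [← schreierCocycle_mul, inv_mul_cancel, schreierCocycle_one]

/-- The subgroup of the `g` that map every `H t(x)` to `H t(x g)` by right multiplication. -/
def schreierSubgroup (H : Subgroup G) : Subgroup G where
  carrier := {g | ∀ x, schreierCocycle t g x ∈ H}
  one_mem' x := by rw [schreierCocycle_one]; exact one_mem H
  mul_mem' hg hh x := by rw [schreierCocycle_mul]; exact mul_mem (hg x) (hh _)
  inv_mem' hg x := by rw [schreierCocycle_inv]; exact inv_mem (hg _)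

variable {t}

lemma mem_schreierSubgroup_bot {g : G} :
    g ∈ schreierSubgroup t ⊥ ↔ ∀ x, t x * g = t (x <• g) :=
  forall_congr' fun _ ↦ Subgroup.mem_bot.trans mul_inv_eq_one

lemma schreierSubgroup_mono {H H' : Subgroup G} (hH : H ≤ H') :
    schreierSubgroup t H ≤ schreierSubgroup t H' :=
  fun _ hg x ↦ hH (hg x)

lemma schreierCocycle_mul_of_mem {k : G} (hk : k ∈ schreierSubgroup t ⊥) (g : G) (x : X) :
    schreierCocycle t (g * k) x = schreierCocycle t g x := by
  rw [schreierCocycle_mul, Subgroup.mem_bot.mp (hk _), mul_one]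

lemma schreierCocycle_mul_of_mem_left {k : G} (hk : k ∈ schreierSubgroup t ⊥) (g : G) (x : X) :
    schreierCocycle t (k * g) x = schreierCocycle t g (x <• k) := by
  rw [schreierCocycle_mul, Subgroup.mem_bot.mp (hk _), one_mul]

theorem existsUnique_mul_inv_mem_of_schreierSubgroup_eq_top {H : Subgroup G} {x₀ : X}
    (base : t x₀ = 1) (orbit : ∀ x, x₀ <• t x = x) (stab : ∀ h ∈ H, x₀ <• h = x₀)
    (cover : schreierSubgroup t H = ⊤) (g : G) : ∃! x, g * (t x)⁻¹ ∈ H := by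
  refine ⟨x₀ <• g, ?_, fun x hx ↦ ?_⟩
  · have hg : g ∈ schreierSubgroup t H := cover ▸ Subgroup.mem_top g
    simpa [schreierCocycle, base] using hg x₀
  · calc x = x₀ <• (g * (t x)⁻¹) <• t x := by rw [stab _ hx, orbit]
      _ = x₀ <• g := by rw [← op_smul_mul, inv_mul_cancel_right]

end SchreierCocycle

/-- The relations between the generators `u`, `v` of `K` and the central element `j = (uv)²`. -/
structure KRelations {G : Type*} [Group G] (u v j : G) : Prop where
  u_pow : u ^ 3 = 1
  v_pow : v ^ 4 = 1
  uv_sq : (u * v) ^ 2 = j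
  vu_sq : (v * u) ^ 2 = j

namespace KRelations

variable {G : Type*} [Group G] {u v j : G}

lemma commute_j_u (h : KRelations u v j) : Commute j u :=
  calc j * u = (u * v) ^ 2 * u := by rw [h.uv_sq]
    _ = u * (v * u) ^ 2 := by simp only [pow_two, mul_assoc]
    _ = u * j := by rw [h.vu_sq]

lemma commute_j_v (h : KRelations u v j) : Commute j v :=
  calc j * v = (v * u) ^ 2 * v := by rw [h.vu_sq]
    _ = v * (u * v) ^ 2 := by simp only [pow_two, mul_assoc]
    _ = v * j := by rw [h.uv_sq]

lemma u_mul_u (h : KRelations u v j) : u * u = u⁻¹ :=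
  eq_inv_of_mul_eq_one_left (by rw [← pow_three', h.u_pow])

lemma v_inv_sq (h : KRelations u v j) : v⁻¹ ^ 2 = v ^ 2 := by
  rw [inv_pow, inv_eq_iff_mul_eq_one, ← pow_add, h.v_pow]

lemma v_mul_u (h : KRelations u v j) : v * u = j * (u⁻¹ * v⁻¹) :=
  calc v * u = u⁻¹ * (u * v) ^ 2 * v⁻¹ := by simp [pow_two, mul_assoc]
    _ = j * (u⁻¹ * v⁻¹) := by rw [h.uv_sq, ← h.commute_j_u.inv_right.eq, mul_assoc]

lemma u_mul_v (h : KRelations u v j) : u * v = j * (v⁻¹ * u⁻¹) :=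
  calc u * v = v⁻¹ * (v * u) ^ 2 * u⁻¹ := by simp [pow_two, mul_assoc]
    _ = j * (v⁻¹ * u⁻¹) := by rw [h.vu_sq, ← h.commute_j_v.inv_right.eq, mul_assoc]

lemma v_sq_mul_u (h : KRelations u v j) : v ^ 2 * u = j * (v * u⁻¹ * v⁻¹) :=
  calc v ^ 2 * u = v * (v * u) := by rw [pow_two, mul_assoc]
    _ = j * (v * u⁻¹ * v⁻¹) := by rw [h.v_mul_u, h.commute_j_v.symm.left_comm, mul_assoc]

lemma v_inv_mul_u (h : KRelations u v j) : v⁻¹ * u = j⁻¹ * (u * (v * u⁻¹)) :=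
  calc v⁻¹ * u = j⁻¹ * (j * (v⁻¹ * u⁻¹)) * (u * u) := by group
    _ = j⁻¹ * (u * (v * u⁻¹)) := by rw [← h.u_mul_v, h.u_mul_u]; group

lemma v_mul_u_inv_mul_v (h : KRelations u v j) :
    v * u⁻¹ * v = j ^ 2 * (u⁻¹ * v ^ 2 * u⁻¹) :=
  calc v * u⁻¹ * v = v * u * (u * v) := by rw [← h.u_mul_u]; group
    _ = j * (u⁻¹ * v⁻¹) * (j * (v⁻¹ * u⁻¹)) := by rw [h.v_mul_u, h.u_mul_v]
    _ = j ^ 2 * (u⁻¹ * v⁻¹ ^ 2 * u⁻¹) := by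
      rw [mul_assoc j,
        (h.commute_j_u.inv_right.mul_right h.commute_j_v.inv_right).symm.left_comm]
      simp only [pow_two, mul_assoc]
    _ = j ^ 2 * (u⁻¹ * v ^ 2 * u⁻¹) := by rw [h.v_inv_sq]

lemma v_mul_u_inv_mul_v_mul_u (h : KRelations u v j) :
    v * u⁻¹ * v * u = j ^ 2 * (u⁻¹ * v ^ 2) := by
  rw [h.v_mul_u_inv_mul_v]
  group

lemma v_mul_u_inv_mul_v_sq_mul_u (h : KRelations u v j) :
    v * u⁻¹ * v ^ 2 * u = j ^ 4 * (u⁻¹ * (v * u⁻¹ * v ^ 2)) :=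
  calc v * u⁻¹ * v ^ 2 * u = v * u⁻¹ * (v ^ 2 * u) := mul_assoc _ _ _
    _ = j * (v * u⁻¹ * v) * u⁻¹ * v⁻¹ := by
      rw [h.v_sq_mul_u, ← mul_assoc, ← (h.commute_j_v.mul_right h.commute_j_u.inv_right).eq]
      simp only [mul_assoc]
    _ = j ^ 3 * (u⁻¹ * (v ^ 2 * (u⁻¹ * u⁻¹)) * v⁻¹) := by
      rw [h.v_mul_u_inv_mul_v]
      simp only [pow_succ, pow_zero, one_mul, mul_assoc]
    _ = j ^ 3 * (u⁻¹ * (j * (v * u⁻¹ * v⁻¹)) * v⁻¹) := by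
      rw [← mul_inv_rev, h.u_mul_u, inv_inv, h.v_sq_mul_u]
    _ = j ^ 4 * (u⁻¹ * (v * u⁻¹ * v⁻¹ ^ 2)) := by
      rw [← h.commute_j_u.inv_right.left_comm]
      simp only [pow_succ, pow_zero, one_mul, mul_assoc]
    _ = j ^ 4 * (u⁻¹ * (v * u⁻¹ * v ^ 2)) := by rw [h.v_inv_sq]

lemma j_pow (h : KRelations u v j) : j ^ 12 = 1 := by
  set g := v * u⁻¹ * v ^ 2 with hg
  have conj_u : g * u * g⁻¹ = j ^ 4 * u⁻¹ := by
    rw [hg, h.v_mul_u_inv_mul_v_sq_mul_u]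
    group
  calc j ^ 12 = (j ^ 4 * u⁻¹) ^ 3 := by
        rw [((h.commute_j_u.pow_left 4).inv_right).mul_pow, inv_pow, h.u_pow, ← pow_mul]
        simp
    _ = 1 := by rw [← conj_u, conj_pow, h.u_pow, mul_one, mul_inv_cancel]

lemma j_inv (h : KRelations u v j) : j⁻¹ = j ^ 11 := by
  rw [inv_eq_iff_mul_eq_one, ← pow_succ', h.j_pow]

lemma v_mul_u_inv_mul_v_inv_mul_u (h : KRelations u v j) :
    v * u⁻¹ * v⁻¹ * u = j ^ 9 * (u * (v * u⁻¹ * v)) :=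
  calc v * u⁻¹ * v⁻¹ * u = v * u⁻¹ * (v⁻¹ * u) := mul_assoc _ _ _
    _ = j⁻¹ * (v ^ 2 * u⁻¹) := by
      rw [h.v_inv_mul_u,
        (h.commute_j_v.mul_right h.commute_j_u.inv_right).inv_left.symm.left_comm]
      simp only [pow_two, mul_assoc, inv_mul_cancel_left]
    _ = j ^ 9 * (u * (j ^ 2 * (u⁻¹ * v ^ 2 * u⁻¹))) := by
      rw [(h.commute_j_u.pow_left 2).symm.left_comm, h.j_inv]
      group
    _ = j ^ 9 * (u * (v * u⁻¹ * v)) := by rw [h.v_mul_u_inv_mul_v]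

end KRelations

/-- A code `(n, a, s, e)` stands for the element `jⁿ uᵃ (vu⁻¹)ˢ vᵉ` of `K`; these 288 words are the
normal forms of the elements of `K`. -/
abbrev KCode : Type := Fin 12 × Fin 3 × Fin 2 × Fin 4

namespace KCode

/-- The entry `(n', a', s', e')` at `(s, e)` means
`(vu⁻¹)ˢ vᵉ u = j^n' u^a' (vu⁻¹)^s' v^e'`. -/
def uTable : Fin 2 → Fin 4 → KCode :=
  ![![(0, 1, 0, 0), (1, 2, 0, 3), (1, 0, 1, 3), (11, 1, 1, 0)],
    ![(0, 0, 0, 1), (2, 2, 0, 2), (4, 2, 1, 2), (9, 1, 1, 1)]]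

/-- Right multiplication by `u` on codes, as a function. -/
def stepU : KCode → KCode := fun (n, a, s, e) ↦
  let (n', a', s', e') := uTable s e
  (n + n', a + a', s', e')

lemma stepU_stepU_stepU : ∀ x, stepU (stepU (stepU x)) = x := by decide +kernel

/-- Right multiplication by `u` on codes. -/
def mulU : Equiv.Perm KCode where
  toFun := stepU
  invFun x := stepU (stepU x)
  left_inv := stepU_stepU_stepU
  right_inv := stepU_stepU_stepU

/-- Right multiplication by `v` on codes. -/
def mulV : Equiv.Perm KCode where
  toFun := fun (n, a, s, e) ↦ (n, a, s, e + 1)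
  invFun := fun (n, a, s, e) ↦ (n, a, s, e - 1)
  left_inv x := by simp
  right_inv x := by simp

end KCode

section KWord

variable {G : Type*} [Group G] {u v j : G}

/-- The element `jⁿ uᵃ (vu⁻¹)ˢ vᵉ` with code `(n, a, s, e)`. -/
def kWord (u v j : G) : KCode → G := fun (n, a, s, e) ↦
  j ^ (n : ℕ) * u ^ (a : ℕ) * (v * u⁻¹) ^ (s : ℕ) * v ^ (e : ℕ)

lemma pow_fin_add {n : ℕ} [NeZero n] {g : G} (hg : g ^ n = 1) (k l : Fin n) :
    g ^ ((k + l : Fin n) : ℕ) = g ^ (k : ℕ) * g ^ (l : ℕ) := by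
  rw [Fin.val_add, ← pow_eq_pow_mod _ hg, pow_add]

namespace KRelations

lemma mul_u_eq_kWord_uTable (h : KRelations u v j) (s : Fin 2) (e : Fin 4) :
    (v * u⁻¹) ^ (s : ℕ) * v ^ (e : ℕ) * u = kWord u v j (KCode.uTable s e) := by
  have u_sq : u ^ 2 = u⁻¹ := by rw [pow_two, h.u_mul_u]
  have v_cube : v ^ 3 = v⁻¹ := eq_inv_of_mul_eq_one_left (by rw [← pow_succ, h.v_pow])
  fin_cases s <;> fin_cases e
  · simp [kWord, KCode.uTable]
  · simpa [kWord, KCode.uTable, u_sq, v_cube, mul_assoc] using h.v_mul_u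
  · simpa [kWord, KCode.uTable, u_sq, v_cube, mul_assoc] using h.v_sq_mul_u
  · simpa [kWord, KCode.uTable, ← h.j_inv, v_cube, mul_assoc] using h.v_inv_mul_u
  · simp [kWord, KCode.uTable]
  · simpa [kWord, KCode.uTable, u_sq, mul_assoc] using h.v_mul_u_inv_mul_v_mul_u
  · simpa [kWord, KCode.uTable, u_sq, mul_assoc] using h.v_mul_u_inv_mul_v_sq_mul_u
  · simpa [kWord, KCode.uTable, v_cube, mul_assoc] using h.v_mul_u_inv_mul_v_inv_mul_u

lemma kWord_mul_u (h : KRelations u v j) (x : KCode) :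
    kWord u v j x * u = kWord u v j (KCode.mulU x) := by
  obtain ⟨n, a, s, e⟩ := x
  rcases htable : KCode.uTable s e with ⟨n', a', s', e'⟩
  calc kWord u v j (n, a, s, e) * u
      = j ^ (n : ℕ) * u ^ (a : ℕ) * kWord u v j (n', a', s', e') := by
        rw [← htable, ← h.mul_u_eq_kWord_uTable]
        simp only [kWord, mul_assoc]
    _ = kWord u v j (n + n', a + a', s', e') := by
        simp only [kWord, pow_fin_add h.j_pow, pow_fin_add h.u_pow, mul_assoc]
        rw [(h.commute_j_u.pow_pow n' a).left_comm]
    _ = kWord u v j (KCode.mulU (n, a, s, e)) := by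
        simp [KCode.mulU, KCode.stepU, htable]

lemma kWord_mul_v (h : KRelations u v j) (x : KCode) :
    kWord u v j x * v = kWord u v j (KCode.mulV x) := by
  obtain ⟨n, a, s, e⟩ := x
  simp [kWord, KCode.mulV, pow_fin_add h.v_pow, mul_assoc]

lemma range_kWord (h : KRelations u v j) :
    Set.range (kWord u v j) = Subgroup.closure {u, v} := by
  apply Set.Subset.antisymm
  · rintro _ ⟨⟨n, a, s, e⟩, rfl⟩
    have hu : u ∈ Subgroup.closure {u, v} := Subgroup.subset_closure (by simp)
    have hv : v ∈ Subgroup.closure {u, v} := Subgroup.subset_closure (by simp)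
    have hj : j ∈ Subgroup.closure {u, v} := h.uv_sq ▸ pow_mem (mul_mem hu hv) 2
    exact mul_mem (mul_mem (mul_mem (pow_mem hj _) (pow_mem hu _))
      (pow_mem (mul_mem hv (inv_mem hu)) _)) (pow_mem hv _)
  · have exists_perm : ∀ y ∈ ({u, v} : Set G), ∃ σ : Equiv.Perm KCode,
        ∀ x, kWord u v j x * y = kWord u v j (σ x) := by
      rintro y (rfl | rfl)
      exacts [⟨_, h.kWord_mul_u⟩, ⟨_, h.kWord_mul_v⟩]
    intro k hk
    induction hk using Subgroup.closure_induction_right with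
    | one => exact ⟨(0, 0, 0, 0), by simp [kWord]⟩
    | mul_right k _ y hy ih =>
      obtain ⟨x, rfl⟩ := ih
      obtain ⟨σ, hσ⟩ := exists_perm y hy
      exact ⟨σ x, (hσ x).symm⟩
    | mul_inv_cancel k _ y hy ih =>
      obtain ⟨x, rfl⟩ := ih
      obtain ⟨σ, hσ⟩ := exists_perm y hy
      exact ⟨σ.symm x, by rw [eq_mul_inv_iff_mul_eq, hσ, σ.apply_symm_apply]⟩

end KRelations

end KWord

/-- A code `(m, k)` stands for a coset `Π bᵐ k` of `Π`, where `m = 0, 1, 2` encode the exponents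
`0, 1, -1` of `b` and `k` is the code of an element of `K`. -/
structure CosetCode where
  bIndex : Fin 3
  kCode : KCode
  deriving DecidableEq, Fintype

namespace CosetCode

/-- The coset `Π` itself. -/
def base : CosetCode := ⟨0, 0, 0, 0, 0⟩

/-- The entry `(m', n', a', s', e')` at `m`, `a`, `s`, `r` says that right multiplication by `b`
maps the coset with code `(m, r, a, s, 0)` to the one with code `(m', n', a', s', e')`. The exponent
`n` of `j` only matters modulo `4` because `j⁴` normalizes `Π`. -/
def bTable : Fin 3 → Fin 3 → Fin 2 → Fin 4 → CosetCode :=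
  ![![![![⟨1, 0, 0, 0, 0⟩, ⟨2, 11, 0, 0, 1⟩, ⟨0, 6, 2, 0, 3⟩, ⟨2, 11, 2, 1, 3⟩],
        ![⟨1, 11, 2, 1, 3⟩, ⟨0, 5, 2, 1, 3⟩, ⟨2, 0, 0, 1, 2⟩, ⟨2, 11, 1, 1, 2⟩]],
      ![![⟨1, 2, 0, 0, 1⟩, ⟨2, 5, 2, 1, 3⟩, ⟨0, 8, 2, 0, 2⟩, ⟨2, 9, 0, 0, 3⟩],
        ![⟨1, 10, 1, 0, 0⟩, ⟨1, 1, 1, 1, 3⟩, ⟨1, 4, 0, 1, 2⟩, ⟨1, 8, 2, 0, 1⟩]],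
      ![![⟨2, 2, 0, 0, 0⟩, ⟨0, 5, 1, 0, 3⟩, ⟨2, 8, 2, 1, 3⟩, ⟨0, 9, 0, 0, 2⟩],
        ![⟨2, 8, 2, 0, 3⟩, ⟨2, 9, 0, 1, 2⟩, ⟨0, 8, 0, 1, 2⟩, ⟨1, 6, 2, 1, 2⟩]]],
    ![![![⟨2, 0, 0, 0, 0⟩, ⟨0, 11, 0, 0, 1⟩, ⟨2, 6, 2, 1, 1⟩, ⟨0, 11, 1, 0, 0⟩],
        ![⟨1, 5, 2, 0, 2⟩, ⟨0, 9, 1, 1, 3⟩, ⟨1, 8, 1, 1, 3⟩, ⟨2, 11, 1, 0, 1⟩]],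
      ![![⟨1, 3, 2, 0, 3⟩, ⟨2, 1, 1, 0, 1⟩, ⟨1, 6, 1, 1, 2⟩, ⟨0, 3, 1, 1, 1⟩],
        ![⟨2, 4, 1, 0, 1⟩, ⟨1, 5, 0, 1, 2⟩, ⟨0, 0, 1, 1, 2⟩, ⟨1, 9, 1, 0, 3⟩]],
      ![![⟨1, 7, 1, 0, 2⟩, ⟨0, 6, 1, 1, 0⟩, ⟨1, 7, 0, 1, 3⟩, ⟨2, 2, 1, 0, 1⟩],
        ![⟨0, 11, 0, 1, 2⟩, ⟨2, 6, 1, 1, 1⟩, ⟨2, 9, 2, 0, 0⟩, ⟨0, 10, 2, 1, 3⟩]]],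
    ![![![⟨0, 0, 0, 0, 0⟩, ⟨1, 11, 0, 0, 1⟩, ⟨0, 6, 1, 0, 2⟩, ⟨0, 11, 2, 0, 1⟩],
        ![⟨2, 0, 1, 1, 3⟩, ⟨0, 1, 0, 1, 3⟩, ⟨0, 4, 2, 1, 3⟩, ⟨2, 11, 2, 0, 3⟩]],
      ![![⟨1, 2, 0, 1, 0⟩, ⟨1, 7, 1, 1, 0⟩, ⟨1, 0, 1, 0, 0⟩, ⟨1, 2, 2, 0, 0⟩],
        ![⟨0, 2, 0, 1, 3⟩, ⟨2, 11, 0, 1, 2⟩, ⟨2, 6, 2, 0, 2⟩, ⟨1, 8, 2, 1, 0⟩]],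
      ![![⟨2, 2, 0, 1, 2⟩, ⟨0, 3, 2, 1, 2⟩, ⟨1, 5, 2, 1, 1⟩, ⟨2, 9, 1, 1, 3⟩],
        ![⟨0, 2, 0, 0, 2⟩, ⟨0, 5, 2, 0, 2⟩, ⟨0, 8, 1, 0, 2⟩, ⟨1, 9, 0, 0, 0⟩]]]]

/-- Right multiplication by `b` on codes, as a function. -/
def stepB : CosetCode → CosetCode := fun ⟨m, n, a, s, e⟩ ↦
  let ⟨m', n', a', s', e'⟩ := bTable m a s (Fin.ofNat 4 n)
  ⟨m', n' + n / 4 * 4, a', s', e' + e⟩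

lemma stepB_stepB_stepB : ∀ x, stepB (stepB (stepB x)) = x := by decide +kernel

/-- The permutation of the codes of cosets that acts by `σ` on the codes of elements of `K`. -/
def congrK (σ : Equiv.Perm KCode) : Equiv.Perm CosetCode where
  toFun x := ⟨x.bIndex, σ x.kCode⟩
  invFun x := ⟨x.bIndex, σ.symm x.kCode⟩
  left_inv _ := by simp
  right_inv _ := by simp

/-- The permutation of the cosets of `Π` induced by right multiplication by `u`. -/
def mulU : Equiv.Perm CosetCode := congrK KCode.mulU

/-- The permutation of the cosets of `Π` induced by right multiplication by `v`. -/
def mulV : Equiv.Perm CosetCode := congrK KCode.mulV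

/-- The permutation of the cosets of `Π` induced by right multiplication by `b`. -/
def mulB : Equiv.Perm CosetCode where
  toFun := stepB
  invFun x := stepB (stepB x)
  left_inv := stepB_stepB_stepB
  right_inv := stepB_stepB_stepB

end CosetCode

open MulOpposite in
/-- The right action of the lattice on the cosets of `Π`. It takes values in the opposite of the
permutation group because `g * h` acts as `g` followed by `h`. -/
def cosetPerm : CS →* (Equiv.Perm CosetCode)ᵐᵒᵖ :=
  PresentedGroup.toGroup
    (f := fun
      | .u => op CosetCode.mulU
      | .v => op CosetCode.mulV
      | .b => op CosetCode.mulB)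
    (by
      rintro r (rfl | rfl | rfl | rfl | rfl | rfl | rfl) <;>
        simp only [map_mul, map_pow, map_inv, FreeGroup.lift_apply_of] <;>
        decide +kernel)

instance : MulAction CSᵐᵒᵖ CosetCode where
  smul g x := (cosetPerm g.unop).unop x
  one_smul x := by
    change (cosetPerm 1).unop x = x
    rw [map_one, MulOpposite.unop_one, Equiv.Perm.one_apply]
  mul_smul g h x := by
    change (cosetPerm (h.unop * g.unop)).unop x = _
    rw [map_mul]
    rfl

section Relations

lemma gb_pow : gb ^ 3 = 1 := PresentedGroup.one_of_mem (rels := csRels) (by simp [csRels])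

lemma commute_gv_gb : Commute gv gb :=
  mul_inv_eq_one.mp <| PresentedGroup.one_of_mem (rels := csRels)
    (x := .of .v * .of .b * (.of .b * .of .v)⁻¹) (by simp [csRels])

lemma buv_pow : (gb * gu * gv) ^ 3 = 1 :=
  PresentedGroup.one_of_mem (rels := csRels) (by simp [csRels])

lemma buvu_sq_mul_gv : (gb * gu * gv * gu) ^ 2 * gv = 1 :=
  PresentedGroup.one_of_mem (rels := csRels) (by simp [csRels])

lemma kRelations : KRelations gu gv gj where
  u_pow := PresentedGroup.one_of_mem (rels := csRels) (by simp [csRels])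
  v_pow := PresentedGroup.one_of_mem (rels := csRels) (by simp [csRels])
  uv_sq := rfl
  vu_sq := Eq.symm <| mul_inv_eq_one.mp <| PresentedGroup.one_of_mem (rels := csRels)
    (x := (.of .u * .of .v) ^ 2 * ((.of .v * .of .u) ^ 2)⁻¹) (by simp [csRels])

end Relations

namespace CosetCode

section Saturation

/-- The position of `x` in a bitmask. It ignores the exponent of `v`: a bitmask stands for a set of
`b`-labelled edges of the coset graph that is invariant under `v`. -/
def edgeBit : CosetCode → ℕ := fun ⟨m, n, a, s, _⟩ ↦ 72 * m + 24 * a + 12 * s + n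

/-- Adds the edge at `x` to the bitmask `S`. -/
def insertEdge (S : ℕ) (x : CosetCode) : ℕ := S ||| 2 ^ edgeBit x

def mulBUV (x : CosetCode) : CosetCode := mulV (mulU (mulB x))

def mulBUVU (x : CosetCode) : CosetCode := mulU (mulBUV x)

/-- The edge at `x` follows from the edges in `S` by one of the relations `(buvu)²v = 1` and
`(buv)³ = 1`. -/
def deducible (S : ℕ) (x : CosetCode) : Bool :=
  S.testBit (edgeBit (mulBUVU x)) ||
    (S.testBit (edgeBit (mulBUV x)) && S.testBit (edgeBit (mulBUV (mulBUV x))))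

def codes : List CosetCode :=
  (List.finRange 3 ×ˢ List.finRange 12 ×ˢ List.finRange 3 ×ˢ List.finRange 2 ×ˢ
    List.finRange 4).map fun (m, k) ↦ ⟨m, k⟩

/-- Runs through a list of edges and adds those that are deducible from the edges found so far. -/
def saturate : List CosetCode → ℕ → ℕ
  | [], S => S
  | x :: l, S => bif !S.testBit (edgeBit x) && deducible S x then saturate l (insertEdge S x)
    else saturate l S

/-- The edges from which all others are deduced. The first three carry trivial Schreier generators,
the last three carry `a₁`, `a₂`, `a₃`. -/
def seeds : List CosetCode :=
  [⟨0, 0, 0, 0, 0⟩, ⟨1, 0, 0, 0, 0⟩, ⟨2, 0, 0, 0, 0⟩,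
    ⟨0, 5, 2, 0, 2⟩, ⟨0, 1, 0, 1, 3⟩, ⟨0, 10, 2, 1, 3⟩]

lemma saturate_seeds :
    saturate (List.replicate 10 codes).flatten (seeds.foldl insertEdge 0) = 2 ^ 216 - 1 := by
  decide +kernel

lemma edgeBit_lt (x : CosetCode) : edgeBit x < 216 := by
  obtain ⟨m, n, a, s, e⟩ := x
  simp only [edgeBit]
  omega

variable {P : CosetCode → Prop}

lemma iff_of_edgeBit_eq (mulV_iff : ∀ x, P (mulV x) ↔ P x) {x y : CosetCode}
    (hxy : edgeBit x = edgeBit y) : P x ↔ P y := by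
  obtain ⟨m, n, a, s, e⟩ := x
  obtain ⟨m', n', a', s', e'⟩ := y
  have iff_zero (e : Fin 4) : P ⟨m, n, a, s, e⟩ ↔ P ⟨m, n, a, s, 0⟩ := by
    induction e using Fin.induction with
    | zero => rfl
    | succ e ih =>
      rw [← ih, ← mulV_iff ⟨m, n, a, s, e.castSucc⟩, ← Fin.coeSucc_eq_succ]
      rfl
  obtain ⟨rfl, rfl, rfl, rfl⟩ : m = m' ∧ n = n' ∧ a = a' ∧ s = s' := by
    simp only [edgeBit] at hxy
    omega
  rw [iff_zero e, iff_zero e']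

/-- Every edge in the bitmask `S` satisfies `P`. -/
def EdgesSatisfy (P : CosetCode → Prop) (S : ℕ) : Prop := ∀ x, S.testBit (edgeBit x) → P x

lemma EdgesSatisfy.insertEdge (mulV_iff : ∀ x, P (mulV x) ↔ P x) {S : ℕ}
    (hS : EdgesSatisfy P S) {x : CosetCode} (hx : P x) : EdgesSatisfy P (insertEdge S x) := by
  intro y hy
  rw [CosetCode.insertEdge, Nat.testBit_or, Nat.testBit_two_pow, Bool.or_eq_true,
    decide_eq_true_iff] at hy
  exact hy.elim (hS y) fun hxy ↦ (iff_of_edgeBit_eq mulV_iff hxy).mp hx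

lemma EdgesSatisfy.saturate (mulV_iff : ∀ x, P (mulV x) ↔ P x)
    (of_mulBUVU : ∀ x, P (mulBUVU x) → P x)
    (of_mulBUV : ∀ x, P (mulBUV x) → P (mulBUV (mulBUV x)) → P x)
    (l : List CosetCode) {S : ℕ} (hS : EdgesSatisfy P S) : EdgesSatisfy P (saturate l S) := by
  induction l generalizing S with
  | nil => exact hS
  | cons x l ih =>
    rw [CosetCode.saturate]
    rcases hx : !S.testBit (edgeBit x) && deducible S x with _ | _
    · exact ih hS
    · refine ih (hS.insertEdge mulV_iff ?_)
      simp only [deducible, Bool.and_eq_true, Bool.or_eq_true] at hx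
      rcases hx.2 with h | ⟨h₁, h₂⟩
      exacts [of_mulBUVU x (hS _ h), of_mulBUV x (hS _ h₁) (hS _ h₂)]

lemma edge_induction (mulV_iff : ∀ x, P (mulV x) ↔ P x)
    (of_mulBUVU : ∀ x, P (mulBUVU x) → P x)
    (of_mulBUV : ∀ x, P (mulBUV x) → P (mulBUV (mulBUV x)) → P x)
    (of_mem_seeds : ∀ x ∈ seeds, P x) (x : CosetCode) : P x := by
  have satisfy_seeds : EdgesSatisfy P (seeds.foldl CosetCode.insertEdge 0) :=
    List.foldlRecOn seeds _ (by simp [EdgesSatisfy]) fun _ hS x hx ↦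
      hS.insertEdge mulV_iff (of_mem_seeds x hx)
  apply satisfy_seeds.saturate mulV_iff of_mulBUVU of_mulBUV (List.replicate 10 codes).flatten
  rw [saturate_seeds, Nat.testBit_two_pow_sub_one]
  exact decide_eq_true (edgeBit_lt x)

end Saturation

/-- The exponents of `b` in the coset representatives. -/
def bExp : Fin 3 → ℤ := ![0, 1, -1]

/-- The pair `(m, k)` for which `Π bᵐ k` is the coset with the given code. -/
def repPair (x : CosetCode) : ℤ × CS := (bExp x.bIndex, kWord gu gv gj x.kCode)

/-- The representative `bᵐ k` of the coset with the given code. -/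
def rep (x : CosetCode) : CS := gb ^ (repPair x).1 * (repPair x).2

lemma range_bExp : Set.range bExp = {-1, 0, 1} := by
  ext i
  simp only [bExp, Matrix.range_cons, Matrix.range_empty, Set.mem_union, Set.mem_singleton_iff,
    Set.mem_insert_iff, Set.mem_empty_iff_false]
  tauto

lemma mem_range_repPair {p : ℤ × CS} :
    p ∈ Set.range repPair ↔ p.1 ∈ ({-1, 0, 1} : Set ℤ) ∧ p.2 ∈ Kgp := by
  rw [← range_bExp, ← SetLike.mem_coe, Kgp, ← kRelations.range_kWord]
  constructor
  · rintro ⟨x, rfl⟩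
    exact ⟨⟨_, rfl⟩, ⟨_, rfl⟩⟩
  · rintro ⟨⟨m, hm⟩, ⟨k, hk⟩⟩
    exact ⟨⟨m, k⟩, Prod.ext hm hk⟩

lemma rep_base : rep base = 1 := by simp [rep, repPair, base, bExp, kWord]

lemma base_smul_rep : ∀ x, base <• rep x = x := by
  change ∀ x, (cosetPerm (rep x)).unop base = x
  decide +kernel

lemma base_smul_of_mem_PiGrp : ∀ g ∈ PiGrp, base <• g = base := by
  suffices PiGrp ≤ (MulAction.stabilizer CSᵐᵒᵖ base).unop from fun g hg ↦ this hg
  rw [PiGrp, Subgroup.closure_le]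
  rintro _ (rfl | rfl | rfl)
  all_goals
    change (cosetPerm _).unop base = base
    decide +kernel

lemma Kgp_le_schreierSubgroup_bot : Kgp ≤ schreierSubgroup rep ⊥ := by
  rw [Kgp, Subgroup.closure_le]
  rintro _ (rfl | rfl) <;> refine mem_schreierSubgroup_bot.mpr fun ⟨m, k⟩ ↦ ?_
  · exact (mul_assoc _ _ _).trans (congrArg _ (kRelations.kWord_mul_u k))
  · exact (mul_assoc _ _ _).trans (congrArg _ (kRelations.kWord_mul_v k))

lemma gu_mem_Kgp : gu ∈ Kgp := Subgroup.subset_closure (by simp)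

lemma gv_mem_Kgp : gv ∈ Kgp := Subgroup.subset_closure (by simp)

lemma gj_mem_Kgp : gj ∈ Kgp := pow_mem (mul_mem gu_mem_Kgp gv_mem_Kgp) 2

section SchreierGenerators

/-- The Schreier generator carried by the `b`-labelled edge at the coset with code `x`. -/
abbrev gbCocycle (x : CosetCode) : CS := schreierCocycle rep gb x

lemma gbCocycle_mulV (x : CosetCode) : gbCocycle (mulV x) = gbCocycle x := by
  have hv := Kgp_le_schreierSubgroup_bot gv_mem_Kgp
  calc gbCocycle (x <• gv) = schreierCocycle rep (gv * gb) x :=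
        (schreierCocycle_mul_of_mem_left hv gb x).symm
    _ = gbCocycle x := by rw [commute_gv_gb.eq, schreierCocycle_mul_of_mem hv]

lemma gbCocycle_mulBUVU (x : CosetCode) : gbCocycle x * gbCocycle (mulBUVU x) = 1 := by
  have hv := Kgp_le_schreierSubgroup_bot gv_mem_Kgp
  have huvu : gu * gv * gu ∈ Kgp := mul_mem (mul_mem gu_mem_Kgp gv_mem_Kgp) gu_mem_Kgp
  have hbuvu (y : CosetCode) : schreierCocycle rep (gb * gu * gv * gu) y = gbCocycle y := by
    simpa only [mul_assoc] using
      schreierCocycle_mul_of_mem (Kgp_le_schreierSubgroup_bot huvu) gb y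
  calc gbCocycle x * gbCocycle (x <• (gb * gu * gv * gu))
      = schreierCocycle rep ((gb * gu * gv * gu) ^ 2 * gv) x := by
        rw [schreierCocycle_mul_of_mem hv, pow_two, schreierCocycle_mul, hbuvu, hbuvu]
    _ = 1 := by rw [buvu_sq_mul_gv, schreierCocycle_one]

lemma gbCocycle_mulBUV (x : CosetCode) :
    gbCocycle x * (gbCocycle (mulBUV x) * gbCocycle (mulBUV (mulBUV x))) = 1 := by
  have huv := Kgp_le_schreierSubgroup_bot (mul_mem gu_mem_Kgp gv_mem_Kgp)
  have hbuv (y : CosetCode) : schreierCocycle rep (gb * gu * gv) y = gbCocycle y := by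
    rw [mul_assoc, schreierCocycle_mul_of_mem huv]
  set w := gb * gu * gv with hw
  calc gbCocycle x * (gbCocycle (x <• w) * gbCocycle (x <• w <• w))
      = schreierCocycle rep (w ^ 3) x := by
        simp only [pow_three, schreierCocycle_mul, hbuv]
    _ = 1 := by rw [hw, buv_pow, schreierCocycle_one]

lemma gbCocycle_base_smul_mem {k k' : CS} (hk : k ∈ Kgp) (hk' : k' ∈ Kgp)
    (h : k * gb * k' ∈ PiGrp) : gbCocycle (base <• k) ∈ PiGrp := by
  have : gbCocycle (base <• k) = k * gb * k' :=
    calc gbCocycle (base <• k) = schreierCocycle rep (k * gb * k') base := by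
          rw [schreierCocycle_mul_of_mem (Kgp_le_schreierSubgroup_bot hk'),
            schreierCocycle_mul_of_mem_left (Kgp_le_schreierSubgroup_bot hk)]
      _ = k * gb * k' := by
          rw [schreierCocycle, base_smul_of_mem_PiGrp _ h, rep_base, one_mul, inv_one, mul_one]
  rwa [this]

lemma rep_bIndex (m : Fin 3) : rep ⟨m, 0, 0, 0, 0⟩ = gb ^ (m : ℕ) := by
  have gb_inv : gb⁻¹ = gb ^ 2 := inv_eq_of_mul_eq_one_right (by rw [← pow_succ', gb_pow])
  fin_cases m <;> simp [rep, repPair, bExp, kWord, gb_inv]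

lemma gbCocycle_bIndex (m : Fin 3) : gbCocycle ⟨m, 0, 0, 0, 0⟩ = 1 := by
  have smul : (⟨m, 0, 0, 0, 0⟩ : CosetCode) <• gb = ⟨m + 1, 0, 0, 0, 0⟩ := by
    fin_cases m <;> rfl
  rw [gbCocycle, schreierCocycle, smul, mul_inv_eq_one, rep_bIndex, rep_bIndex, pow_fin_add gb_pow]
  simp

lemma gbCocycle_mem_of_mem_seeds : ∀ x ∈ seeds, gbCocycle x ∈ PiGrp := by
  have hu := gu_mem_Kgp
  have hv := gv_mem_Kgp
  have hj := gj_mem_Kgp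
  have seed₁ : (⟨0, 5, 2, 0, 2⟩ : CosetCode) = base <• (gv * gu * gv⁻¹ * gj ^ 4) := by
    decide +kernel
  have seed₂ : (⟨0, 1, 0, 1, 3⟩ : CosetCode) = base <• (gv ^ 2 * gu) := by decide +kernel
  have seed₃ : (⟨0, 10, 2, 1, 3⟩ : CosetCode) = base <• (gu⁻¹ * gv ^ 2 * gu * gj ^ 9) := by
    decide +kernel
  simp only [seeds, List.forall_mem_cons, gbCocycle_bIndex, one_mem, true_and, seed₁,
    seed₂, seed₃]
  refine ⟨gbCocycle_base_smul_mem (k' := gu * gv * gj ^ 2) (by aesop) (by aesop) ?_,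
    gbCocycle_base_smul_mem (k' := gu * gv⁻¹ * gu * gv ^ 2 * gj) (by aesop) (by aesop) ?_,
    gbCocycle_base_smul_mem (k' := gv⁻¹ * gu * gv⁻¹ * gj ^ 8) (by aesop) (by aesop) ?_,
    List.forall_mem_nil _⟩
  · simpa only [a1, mul_assoc] using a1_mem
  · simpa only [a2, mul_assoc] using a2_mem
  · simpa only [a3, mul_assoc] using a3_mem

lemma gbCocycle_mem_PiGrp (x : CosetCode) : gbCocycle x ∈ PiGrp := by
  induction x using edge_induction with
  | mulV_iff x => rw [gbCocycle_mulV]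
  | of_mulBUVU x h =>
    exact (PiGrp.mul_mem_cancel_right h).mp (gbCocycle_mulBUVU x ▸ one_mem PiGrp)
  | of_mulBUV x h₁ h₂ =>
    exact (PiGrp.mul_mem_cancel_right (mul_mem h₁ h₂)).mp (gbCocycle_mulBUV x ▸ one_mem PiGrp)
  | of_mem_seeds x hx => exact gbCocycle_mem_of_mem_seeds x hx

lemma schreierSubgroup_rep_PiGrp : schreierSubgroup rep PiGrp = ⊤ := by
  have Kgp_le : Kgp ≤ schreierSubgroup rep PiGrp :=
    Kgp_le_schreierSubgroup_bot.trans (schreierSubgroup_mono bot_le)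
  rw [eq_top_iff, ← PresentedGroup.closure_range_of, Subgroup.closure_le]
  rintro _ ⟨_ | _ | _, rfl⟩
  · exact Kgp_le gu_mem_Kgp
  · exact Kgp_le gv_mem_Kgp
  · exact gbCocycle_mem_PiGrp

end SchreierGenerators

end CosetCode

/-- every element of `G` lies in the coset `Π bᵐ k` for exactly one
pair `(m, k)` with `m ∈ {−1, 0, 1}` and `k ∈ K`. -/
theorem stmt_5 (g : CS) :
    ∃! p : ℤ × CS,
      p.1 ∈ ({-1, 0, 1} : Set ℤ) ∧ p.2 ∈ Kgp ∧ g * (gb ^ p.1 * p.2)⁻¹ ∈ PiGrp := by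
  obtain ⟨x, hx, hunique⟩ : ∃! x, g * (CosetCode.rep x)⁻¹ ∈ PiGrp :=
    existsUnique_mul_inv_mem_of_schreierSubgroup_eq_top CosetCode.rep_base CosetCode.base_smul_rep
      CosetCode.base_smul_of_mem_PiGrp CosetCode.schreierSubgroup_rep_PiGrp g
  obtain ⟨hm, hk⟩ := CosetCode.mem_range_repPair.mp ⟨x, rfl⟩
  refine ⟨CosetCode.repPair x, ⟨hm, hk, hx⟩, ?_⟩
  rintro p ⟨hpm, hpk, hp⟩
  obtain ⟨y, rfl⟩ := CosetCode.mem_range_repPair.mpr ⟨hpm, hpk⟩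
  rw [hunique y hp]
end

section
/- There is a group homomorphism f : Π → ℤ² which induces an isomorphism Π/[Π,Π] → ℤ² and satisfies f(a₁) = (1,3), f(a₂) = (−2,1) and f(a₃) = (−1,−1). In particular, a₁³a₂⁻²a₃⁷ lies in the commutator subgroup [Π,Π], and f(a₁a₂⁻¹a₃²) = (1,0) and f(a₁⁻¹a₂a₃⁻³) = (0,1). -/
/-!
*Existence of `f`.* `G` acts on `ℤ[τ]⁷`, where `τ` is a primitive sixth root of unity, by affine
maps whose linear parts generate the product of `U₃(3)` and the cube roots of unity. There is a
linear functional on `ℤ[τ]⁷` that every element of `Π` changes only by an additive constant, and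
this constant is `f`.

*The kernel.* Let `α₁, α₂, α₃` be the classes of the `aᵢ` in `Π/[Π,Π]`. The integral relations
between the vectors `f(aᵢ)` are the multiples of `(3, -2, 7)`, so it suffices that
`3α₁ - 2α₂ + 7α₃ = 0`. The group `⟨u, v⟩` has three free orbits on `G/Π`, with representatives
`1, t₁, t₂`; extending these to a `⟨u, v⟩`-equivariant transversal, each edge labelled `b` of the
coset graph obtains a weight in `Π/[Π,Π]`, and edges labelled `u` and `v` have weight zero. The
relations `bub = ubu`, `vb = bv` and `b³ = 1` give many identities `b x b = y b z` with
`x, y, z ∈ ⟨u, v⟩`; each expresses the weight of one edge as the sum of the weights of two others.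
Starting from the edges for `a₁, a₂, a₃, t₁, t₂`, one edge is reached along two routes, and the two
weights differ by the required relation.
-/

namespace CartwrightSteger

section General

variable {G : Type*} [Group G] {x t : G}

lemma commutator_sq_eq_inv_sq (hx : x ^ 3 = 1) (ht : t ^ 2 = 1) (hc : Commute ((x * t) ^ 3) t) :
    (t * x⁻¹ * t * x) ^ 2 = ((x * t) ^ 3)⁻¹ ^ 2 := by
  set c := (x * t) ^ 3 with hcdef
  have hcx : Commute c x := by
    have h : Commute c (x * t * t⁻¹) :=
      ((Commute.refl (x * t)).pow_left 3).mul_right hc.inv_right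
    rwa [mul_inv_cancel_right] at h
  have hcw : Commute c⁻¹ (x * t * x ^ 2) :=
    ((hcx.mul_right hc).mul_right (hcx.pow_right 2)).inv_left
  have htinv : t⁻¹ = t := inv_eq_of_mul_eq_one_left (by rw [← sq, ht])
  calc (t * x⁻¹ * t * x) ^ 2 = (t⁻¹ * x⁻¹ * t⁻¹ * x) ^ 2 := by rw [htinv]
    _ = (c⁻¹ * (x * t * x ^ 2)) ^ 2 := by
      simp only [hcdef, pow_succ, pow_zero, one_mul, mul_inv_rev, mul_assoc, inv_mul_cancel_left]
    _ = c⁻¹ ^ 2 * (x * (t * x ^ 3 * t) * x ^ 2) := by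
      rw [hcw.mul_pow]
      simp only [pow_succ, pow_zero, one_mul, mul_assoc]
    _ = c⁻¹ ^ 2 := by
      rw [hx, mul_one, ← sq, ht, mul_one, ← pow_succ', hx, mul_one]

-- Conjugation by `t` inverts the commutator of `t` and `x`, whose square is `c⁻²` for the central
-- element `c = (x * t) ^ 3`; hence `c ^ 4 = 1`.
lemma mul_pow_twelve_eq_one (hx : x ^ 3 = 1) (ht : t ^ 2 = 1) (hc : Commute ((x * t) ^ 3) t) :
    (x * t) ^ 12 = 1 := by
  have hcomm := commutator_sq_eq_inv_sq hx ht hc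
  set c := (x * t) ^ 3 with hcdef
  have htinv : t⁻¹ = t := inv_eq_of_mul_eq_one_left (by rw [← sq, ht])
  have hconj : t * (t * x⁻¹ * t * x) * t⁻¹ = (t * x⁻¹ * t * x)⁻¹ := by
    simp only [mul_inv_rev, inv_inv, htinv, ← mul_assoc, ← sq, ht, one_mul]
  have hinv : c⁻¹ ^ 2 = c ^ 2 :=
    calc c⁻¹ ^ 2 = t * c⁻¹ ^ 2 * t⁻¹ := by rw [← (hc.inv_left.pow_left 2).eq, mul_inv_cancel_right]
      _ = (t * (t * x⁻¹ * t * x) * t⁻¹) ^ 2 := by rw [conj_pow, hcomm]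
      _ = c ^ 2 := by rw [hconj, inv_pow, hcomm, inv_pow, inv_inv]
  calc (x * t) ^ 12 = c ^ 2 * c ^ 2 := by rw [← pow_add, hcdef, ← pow_mul]
    _ = 1 := by nth_rw 1 [← hinv]; rw [inv_pow, inv_mul_cancel]

end General

section Relations

lemma gu_pow_three : gu ^ 3 = 1 :=
  PresentedGroup.one_of_mem (x := FreeGroup.of CSgen.u ^ 3) (by simp [csRels])

lemma gv_pow_four : gv ^ 4 = 1 :=
  PresentedGroup.one_of_mem (x := FreeGroup.of CSgen.v ^ 4) (by simp [csRels])

lemma commute_gv_gb : Commute gv gb :=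
  PresentedGroup.mk_eq_mk_of_mul_inv_mem (x := FreeGroup.of CSgen.v * FreeGroup.of CSgen.b)
    (y := FreeGroup.of CSgen.b * FreeGroup.of CSgen.v) (by simp [csRels])

lemma gv_mul_gu_sq : (gv * gu) ^ 2 = gj :=
  (PresentedGroup.mk_eq_mk_of_mul_inv_mem
    (x := (FreeGroup.of CSgen.u * FreeGroup.of CSgen.v) ^ 2)
    (y := (FreeGroup.of CSgen.v * FreeGroup.of CSgen.u) ^ 2) (by simp [csRels])).symm

lemma gb_mul_gu_mul_gv_pow_three : (gb * gu * gv) ^ 3 = 1 :=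
  PresentedGroup.one_of_mem
    (x := (FreeGroup.of CSgen.b * FreeGroup.of CSgen.u * FreeGroup.of CSgen.v) ^ 3)
    (by simp [csRels])

lemma gb_gu_gv_gu_sq_mul_gv : (gb * gu * gv * gu) ^ 2 * gv = 1 :=
  PresentedGroup.one_of_mem
    (x := (FreeGroup.of CSgen.b * FreeGroup.of CSgen.u * FreeGroup.of CSgen.v *
      FreeGroup.of CSgen.u) ^ 2 * FreeGroup.of CSgen.v)
    (by simp [csRels])

lemma gb_pow_three : gb ^ 3 = 1 :=
  PresentedGroup.one_of_mem (x := FreeGroup.of CSgen.b ^ 3) (by simp [csRels])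

lemma gu_gv_gu : gu * gv * gu = gj * gv⁻¹ := by
  rw [gj, sq]; group

lemma gv_gu_gv : gv * gu * gv = gj * gu⁻¹ := by
  rw [← gv_mul_gu_sq, sq]; group

lemma commute_gj_gu : Commute gj gu := by
  have h : gu * (gv * gu) ^ 2 = (gu * gv) ^ 2 * gu := by simp only [sq, mul_assoc]
  rw [gv_mul_gu_sq] at h
  exact h.symm

lemma commute_gj_gv : Commute gj gv := by
  have h : gv * (gu * gv) ^ 2 = (gv * gu) ^ 2 * gv := by simp only [sq, mul_assoc]
  rw [gv_mul_gu_sq] at h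
  exact h.symm

lemma gb_inv : gb⁻¹ = gj * gv⁻¹ * gb * gj := by
  have h : gb * (gu * gv * gu * gb * gj) = 1 := by
    simp only [← gb_gu_gv_gu_sq_mul_gv, gj, sq, mul_assoc]
  rw [inv_eq_of_mul_eq_one_right h, gu_gv_gu]

lemma gb_mul_gb : gb * gb = gb⁻¹ :=
  eq_inv_of_mul_eq_one_left (by rw [← sq, ← pow_succ, gb_pow_three])

lemma gb_gu_gb : gb * gu * gb = gu * gb * gu := by
  have hgb : gb * (gu * gv) * gb = (gu * gv)⁻¹ * gb⁻¹ * (gu * gv)⁻¹ := by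
    have h := gb_mul_gu_mul_gv_pow_three
    rw [← mul_assoc, eq_mul_inv_iff_mul_eq, eq_mul_inv_iff_mul_eq, eq_inv_iff_mul_eq_one, ← h]
    simp only [pow_succ, pow_zero, one_mul, mul_assoc]
  refine mul_right_cancel (b := gv) ?_
  calc gb * gu * gb * gv
      = gb * (gu * gv) * gb := by rw [mul_assoc, ← commute_gv_gb.eq]; simp only [mul_assoc]
    _ = gu * gb * gu * gv := by rw [hgb, gb_inv, gj]; simp only [sq, mul_assoc]; group

-- The lemmas ending in `_mul` rewrite right-associated words in `u`, `v` to normal forms with a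
-- power of the central element `j` in front; the factor `z` lets them apply inside a word.
lemma gu_gu_gu_mul (z : CS) : gu * (gu * (gu * z)) = z := by
  simpa [pow_succ, mul_assoc] using congr($gu_pow_three * z)

lemma gv_gu_gv_mul (z : CS) : gv * (gu * (gv * z)) = gj * (gu * (gu * z)) := by
  have h : gu⁻¹ = gu * gu := inv_eq_of_mul_eq_one_left (by simpa [pow_succ] using gu_pow_three)
  simpa [h, mul_assoc] using congr($gv_gu_gv * z)

lemma gu_gj_mul (z : CS) : gu * (gj * z) = gj * (gu * z) := commute_gj_gu.symm.left_comm z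

lemma gv_gj_mul (z : CS) : gv * (gj * z) = gj * (gv * z) := commute_gj_gv.symm.left_comm z

lemma gu_gv_sq_pow_three : (gu * gv ^ 2) ^ 3 = gj ^ 3 := by
  refine mul_right_cancel (b := (1 : CS)) ?_
  simp only [pow_succ, pow_zero, one_mul, mul_assoc, gv_gu_gv_mul, gu_gu_gu_mul, gu_gj_mul,
    gv_gj_mul]

lemma gj_pow_twelve : gj ^ 12 = 1 := by
  have hv : (gv ^ 2) ^ 2 = 1 := by rw [← pow_mul]; exact gv_pow_four
  have h := mul_pow_twelve_eq_one gu_pow_three hv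
    (by rw [gu_gv_sq_pow_three]; exact commute_gj_gv.pow_pow 3 2)
  rw [← h, pow_mul _ 3 4, pow_mul (gu * gv ^ 2) 3 4, gu_gv_sq_pow_three]

lemma gj_mul (z : CS) : gj * z = gj ^ 1 * z := by rw [pow_one]

lemma gu_gj_pow_mul (n : ℕ) (z : CS) : gu * (gj ^ n * z) = gj ^ n * (gu * z) :=
  (commute_gj_gu.pow_left n).symm.left_comm z

lemma gv_gj_pow_mul (n : ℕ) (z : CS) : gv * (gj ^ n * z) = gj ^ n * (gv * z) :=
  (commute_gj_gv.pow_left n).symm.left_comm z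

lemma gj_pow_gj_pow_mul (m n : ℕ) (z : CS) : gj ^ m * (gj ^ n * z) = gj ^ (m + n) * z := by
  rw [pow_add, mul_assoc]

lemma gj_pow_add_twelve (n : ℕ) : gj ^ (n + 12) = gj ^ n := by
  rw [pow_add, gj_pow_twelve, mul_one]

lemma gu_inv : gu⁻¹ = gu ^ 2 :=
  inv_eq_of_mul_eq_one_right (by rw [← pow_succ', gu_pow_three])

lemma gv_inv : gv⁻¹ = gv ^ 3 :=
  inv_eq_of_mul_eq_one_right (by rw [← pow_succ', gv_pow_four])

lemma gj_inv : gj⁻¹ = gj ^ 11 :=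
  inv_eq_of_mul_eq_one_right (by rw [← pow_succ', gj_pow_twelve])

lemma gu_pow_succ_mul (n : ℕ) (z : CS) : gu ^ (n + 1) * z = gu * (gu ^ n * z) := by
  rw [pow_succ', mul_assoc]

lemma gv_pow_succ_mul (n : ℕ) (z : CS) : gv ^ (n + 1) * z = gv * (gv ^ n * z) := by
  rw [pow_succ', mul_assoc]

lemma gv_gv_gv_mul (z : CS) : gv * (gv * (gv * z)) = gj ^ 11 * (gu * (gv * (gu * z))) := by
  have h : gv ^ 3 = gj ^ 11 * (gu * gv * gu) := by
    rw [← gv_inv, ← gj_inv, gu_gv_gu, inv_mul_cancel_left]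
  simpa [pow_succ, mul_assoc] using congr($h * z)

lemma gu_gv_gu_gu_gv_mul (z : CS) :
    gu * (gv * (gu * (gu * (gv * z)))) = gj ^ 2 * (gv * (gv * (gu * (gu * z)))) := by
  have h := congr(gj * $(gv_gv_gv_mul (gu * (gv * z))))
  rw [gv_gu_gv_mul] at h
  simpa only [gj_mul, gj_pow_gj_pow_mul, gv_gj_pow_mul, Nat.reduceAdd, gj_pow_twelve, one_mul]
    using h.symm

lemma gv_gu_gu_gv_gu_mul (z : CS) :
    gv * (gu * (gu * (gv * (gu * z)))) = gj ^ 2 * (gu * (gu * (gv * (gv * z)))) := by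
  have h := congr(gj * $(gv_gu_gv_mul (gv * (gv * z))))
  rw [gv_gv_gv_mul] at h
  simpa only [gj_mul, gj_pow_gj_pow_mul, gu_gj_pow_mul, gv_gj_pow_mul, Nat.reduceAdd,
    gj_pow_twelve, one_mul] using h

lemma gu_gu_gv_gv_gu_gu_mul (z : CS) :
    gu * (gu * (gv * (gv * (gu * (gu * z))))) = gj ^ 10 * (gv * (gu * (gu * (gv * z)))) := by
  have h : gj * (gu * (gu * (gv * (gv * (gj * (gu * (gu * z))))))) =
      gv * (gu * (gu * (gv * z))) := by
    have hv (w : CS) : gv * (gv * (gv * (gv * w))) = w := by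
      simpa [pow_succ, mul_assoc] using congr($gv_pow_four * w)
    rw [← gv_gu_gv_mul, ← gv_gu_gv_mul, hv]
  rw [← h]
  simp only [gj_mul, gj_pow_gj_pow_mul, gu_gj_pow_mul, gv_gj_pow_mul, Nat.reduceAdd,
    gj_pow_twelve, one_mul]

lemma gv_gv_gu_gu_gv_gv_mul (z : CS) :
    gv * (gv * (gu * (gu * (gv * (gv * z))))) = gj ^ 9 * (gu * (gv * (gv * (gu * z)))) := by
  have h := congr(gj ^ 11 * (gv * (gv * $(gv_gu_gv_mul (gv * (gv * z))))))
  simpa only [gj_mul, gj_pow_gj_pow_mul, gu_gj_pow_mul, gv_gj_pow_mul, Nat.reduceAdd,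
    gj_pow_twelve, one_mul, gv_gv_gv_mul, gu_gu_gu_mul, gj_pow_add_twelve, pow_zero] using h.symm

lemma gv_gu_gu_gv_gv_gu_mul (z : CS) :
    gv * (gu * (gu * (gv * (gv * (gu * z))))) =
      gj ^ 6 * (gu * (gv * (gv * (gu * (gu * (gv * z)))))) := by
  have hv : (gv ^ 2) ^ 2 = 1 := by rw [← pow_mul]; exact gv_pow_four
  have hvinv : (gv ^ 2)⁻¹ = gv ^ 2 := inv_eq_of_mul_eq_one_left (by rw [← sq, hv])
  have hsq : (gv ^ 2 * gu⁻¹ * gv ^ 2 * gu) ^ 2 = gj ^ 6 := by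
    rw [commutator_sq_eq_inv_sq gu_pow_three hv
      (by rw [gu_gv_sq_pow_three]; exact commute_gj_gv.pow_pow 3 2), gu_gv_sq_pow_three]
    simp only [← inv_pow, gj_inv, ← pow_mul, Nat.reduceMul, gj_pow_add_twelve]
  have hinv : gu⁻¹ * gv ^ 2 * gu * gv ^ 2 = (gv ^ 2 * gu⁻¹ * gv ^ 2 * gu)⁻¹ := by
    simp only [mul_inv_rev, inv_inv, hvinv, mul_assoc]
  have hcomm : gv ^ 2 * gu⁻¹ * gv ^ 2 * gu = gj ^ 6 * (gu⁻¹ * gv ^ 2 * gu * gv ^ 2) := by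
    rw [hinv, ← hsq, pow_two (_ * gu), mul_inv_cancel_right]
  calc gv * (gu * (gu * (gv * (gv * (gu * z)))))
      = gv ^ 3 * (gv ^ 2 * gu⁻¹ * gv ^ 2 * gu * z) := by
        rw [← gv_inv]; simp only [gu_inv, sq, mul_assoc, inv_mul_cancel_left]
    _ = gj ^ 6 * (gu * (gv * (gv * (gu * (gu * (gv * z)))))) := by
        rw [hcomm]
        simp only [gu_inv, mul_assoc, gu_pow_succ_mul, gv_pow_succ_mul, pow_zero, one_mul,
          gj_pow_gj_pow_mul, gu_gj_pow_mul, gv_gj_pow_mul, Nat.reduceAdd, gj_pow_add_twelve,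
          gv_gv_gv_mul, gu_gu_gu_mul, gu_gv_gu_gu_gv_mul]

-- The exponent `k` is arbitrary because `v` commutes with `b`.
lemma gb_braid (m n : ℕ) (k : ℕ := 0) :
    gb * (gv ^ m * gu * gv ^ n) * gb = gv ^ m * gu * gv ^ k * gb * ((gv ^ k)⁻¹ * gu * gv ^ n) := by
  calc gb * (gv ^ m * gu * gv ^ n) * gb
      = gb * gv ^ m * gu * (gv ^ n * gb) := by simp only [mul_assoc]
    _ = gv ^ m * (gb * gu * gb) * gv ^ n := by
      rw [← (commute_gv_gb.pow_left m).eq, (commute_gv_gb.pow_left n).eq]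
      simp only [mul_assoc]
    _ = gv ^ m * gu * gv ^ k * gb * ((gv ^ k)⁻¹ * gu * gv ^ n) := by
      rw [gb_gu_gb, mul_assoc _ (gv ^ k), (commute_gv_gb.pow_left k).eq]
      simp only [mul_assoc, mul_inv_cancel_left]

lemma gb_square (m : ℕ) : gb * gv ^ m * gb = gv ^ m * gj * gv⁻¹ * gb * gj := by
  rw [← (commute_gv_gb.pow_left m).eq, mul_assoc, gb_mul_gb, gb_inv]
  simp only [mul_assoc]

end Relations

section CosetGraph

/-- The class of `a₁` in the abelianization of `Π`, written additively. -/
def α₁ : Additive (Abelianization PiGrp) := Additive.ofMul (Abelianization.of ⟨a1, a1_mem⟩)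

/-- The class of `a₂` in the abelianization of `Π`, written additively. -/
def α₂ : Additive (Abelianization PiGrp) := Additive.ofMul (Abelianization.of ⟨a2, a2_mem⟩)

/-- The class of `a₃` in the abelianization of `Π`, written additively. -/
def α₃ : Additive (Abelianization PiGrp) := Additive.ofMul (Abelianization.of ⟨a3, a3_mem⟩)

/-- Together with `1` and `t₂`, a set of representatives for the orbits of `⟨u, v⟩` on `G / Π`. -/
def t₁ : CS := gb * gv * gu⁻¹ * gv ^ 2 * gj ^ 8

/-- Together with `1` and `t₁`, a set of representatives for the orbits of `⟨u, v⟩` on `G / Π`. -/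
def t₂ : CS := gb * gv⁻¹ * gj

/-- Left multiplication by `L * b * R` carries the coset `s Π` to `t Π`; the element of `Π` that
compares the representatives has class `c` in the abelianization. In terms of the coset graph of
`Π`, this is an edge labelled `b` between translates of `s` and `t` by `⟨u, v⟩`, with its weight
in `Π / [Π, Π]`. -/
def Edge (c : Additive (Abelianization PiGrp)) (L R s t : CS) : Prop :=
  ∃ p : PiGrp, L * gb * R * s = t * p ∧ Additive.ofMul (Abelianization.of p) = c

namespace Edge

variable {c d e : Additive (Abelianization PiGrp)} {L₁ L₂ L R₁ R₂ R r s t : CS}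

lemma symm (h : Edge c L R s t) : Edge (-c) (R⁻¹ * gj * gv⁻¹) (gj * L⁻¹) t s := by
  obtain ⟨p, hp, rfl⟩ := h
  refine ⟨p⁻¹, ?_, by simp⟩
  calc R⁻¹ * gj * gv⁻¹ * gb * (gj * L⁻¹) * t
      = R⁻¹ * (gj * gv⁻¹ * gb * gj) * L⁻¹ * t := by simp only [mul_assoc]
    _ = s * (L * gb * R * s)⁻¹ * t := by rw [← gb_inv]; group
    _ = s * ((p⁻¹ : PiGrp) : CS) := by rw [hp, Subgroup.coe_inv]; group

-- Only `w = 1` matters for the conclusion; a general `w` is what the rewriting lemmas need.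
lemma trans (h₁ : Edge c L₁ R₁ s t) (h₂ : Edge d L₂ R₂ t r) {x y z : CS}
    (hb : gb * x * gb = y * gb * z)
    (hwords : ∀ w, R₂ * (L₁ * w) = x * w ∧ L * w = L₂ * (y * w) ∧ R * w = z * (R₁ * w) := by
      intro w
      simp only [mul_inv_rev, inv_inv, mul_assoc, one_mul, inv_one, pow_zero, gu_inv, gv_inv,
        gj_inv, ← inv_pow, ← pow_mul, gu_pow_succ_mul, gv_pow_succ_mul, gj_mul, gj_pow_gj_pow_mul,
        gj_pow_add_twelve, gu_gj_pow_mul, gv_gj_pow_mul, gu_gu_gu_mul, gv_gu_gv_mul, gv_gv_gv_mul,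
        gu_gv_gu_gu_gv_mul, gv_gu_gu_gv_gu_mul, gu_gu_gv_gv_gu_gu_mul, gv_gv_gu_gu_gv_gv_mul,
        gv_gu_gu_gv_gv_gu_mul, Nat.reduceAdd, Nat.reduceMul, and_self])
    (he : e = c + d := by abel) : Edge e L R s r := by
  obtain ⟨hmid, hL, hR⟩ := by simpa only [mul_one] using hwords 1
  obtain ⟨p, hp, rfl⟩ := h₁
  obtain ⟨q, hq, rfl⟩ := h₂
  refine ⟨q * p, ?_, by rw [he, map_mul, ofMul_mul, add_comm]⟩
  calc L * gb * R * s = L₂ * (y * gb * z) * R₁ * s := by rw [hL, hR]; simp only [mul_assoc]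
    _ = L₂ * gb * (R₂ * L₁) * gb * R₁ * s := by rw [← hb, hmid]; simp only [mul_assoc]
    _ = L₂ * gb * R₂ * (L₁ * gb * R₁ * s) := by simp only [mul_assoc]
    _ = r * ((q * p : PiGrp) : CS) := by
      rw [hp, ← mul_assoc, hq, Subgroup.coe_mul, mul_assoc]

lemma class_unique (h : Edge c L R s t) (h' : Edge d L R s t) : c = d := by
  obtain ⟨p, hp, rfl⟩ := h
  obtain ⟨q, hq, rfl⟩ := h'
  rw [Subtype.ext (mul_left_cancel (hp.symm.trans hq) : (p : CS) = q)]

end Edge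

lemma edge_a1 : Edge α₁ (gv * gu * gv⁻¹ * gj ^ 4) (gu * gv * gj ^ 2) 1 1 :=
  ⟨⟨a1, a1_mem⟩, by simp only [a1, mul_assoc, mul_one, one_mul], rfl⟩

lemma edge_a2 : Edge α₂ (gv ^ 2 * gu) (gu * gv⁻¹ * gu * gv ^ 2 * gj) 1 1 :=
  ⟨⟨a2, a2_mem⟩, by simp only [a2, mul_assoc, mul_one, one_mul], rfl⟩

lemma edge_a3 :
    Edge α₃ (gu⁻¹ * gv ^ 2 * gu * gj ^ 9) (gv⁻¹ * gu * gv⁻¹ * gj ^ 8) 1 1 :=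
  ⟨⟨a3, a3_mem⟩, by simp only [a3, mul_assoc, mul_one, one_mul], rfl⟩

lemma edge_t₁ : Edge 0 1 (gv * gu⁻¹ * gv ^ 2 * gj ^ 8) 1 t₁ :=
  ⟨1, by simp only [t₁, mul_assoc, mul_one, one_mul, Subgroup.coe_one], rfl⟩

lemma edge_t₂ : Edge 0 1 (gv⁻¹ * gj) 1 t₂ :=
  ⟨1, by simp only [t₂, mul_assoc, mul_one, one_mul, Subgroup.coe_one], rfl⟩

-- In the names of the edges, `U` and `V` stand for `u⁻¹` and `v⁻¹`, and powers of the central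
-- element `j` are omitted where possible.
lemma edge_v_b_UvUV :
    Edge (-α₃) (gv * gj) (gu⁻¹ * gv * gu⁻¹ * gv⁻¹ * gj ^ 6) 1 t₁ :=
  edge_a3.symm.trans edge_t₁ (gb_square 2)

lemma edge_Vuvv_b_uV :
    Edge (-α₂) (gv⁻¹ * gu * gv ^ 2 * gj ^ 11) (gu * gv⁻¹ * gj) t₂ 1 :=
  edge_t₂.symm.trans edge_a2.symm (gb_braid 1 3)

lemma edge_Vuv_b_vUv :
    Edge (2 • α₂) (gv⁻¹ * gu * gv * gj ^ 10) (gv * gu⁻¹ * gv * gj ^ 3) 1 t₂ :=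
  edge_a2.trans edge_Vuvv_b_uV.symm (gb_braid 0 1)

lemma edge_Uvv_b_j3 :
    Edge (α₁ + α₂) (gu⁻¹ * gv ^ 2 * gj ^ 3) (gj ^ 3) 1 1 :=
  edge_a1.trans edge_a2 (gb_braid 2 1)

lemma edge_VUv_b_v :
    Edge (-3 • α₂) (gv⁻¹ * gu⁻¹ * gv * gj ^ 9) (gv * gj ^ 3) t₂ 1 :=
  edge_Vuv_b_vUv.symm.trans edge_a2.symm (gb_braid 0 1)

lemma edge_UV_b_vU :
    Edge (-2 • α₃) (gu⁻¹ * gv⁻¹ * gj ^ 2) (gv * gu⁻¹ * gj ^ 2) 1 t₁ :=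
  edge_a3.symm.trans edge_v_b_UvUV (gb_braid 0 3)

lemma edge_UV_b_vUV :
    Edge (-α₁ - 2 • α₃) (gu⁻¹ * gv⁻¹ * gj ^ 3) (gv * gu⁻¹ * gv⁻¹ * gj ^ 10) 1 t₁ :=
  edge_a1.symm.trans edge_UV_b_vU (gb_square 1)

lemma edge_Uvv_b_j4 :
    Edge (α₂ - 2 • α₃) (gu⁻¹ * gv ^ 2 * gj ^ 4) (gj ^ 4) 1 t₁ :=
  edge_Uvv_b_j3.trans edge_UV_b_vUV (gb_square 0)

lemma edge_Vu_b_UvU :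
    Edge (2 • α₃) (gv⁻¹ * gu) (gu⁻¹ * gv * gu⁻¹ * gj ^ 10) t₁ t₂ :=
  edge_UV_b_vU.symm.trans edge_t₂ (gb_braid 3 2)

lemma edge_v_b_u :
    Edge (-α₃) (gv * gj ^ 5) (gu * gj) t₁ 1 :=
  edge_t₁.symm.trans edge_a3.symm (gb_braid 0 0)

lemma edge_vU_b_UvUv :
    Edge (α₁ + α₃) (gv * gu⁻¹ * gj ^ 11) (gu⁻¹ * gv * gu⁻¹ * gv * gj) 1 t₁ :=
  edge_a1.trans edge_v_b_u.symm (gb_braid 0 3)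

lemma edge_Vuvv_b_Vuv :
    Edge (-α₁ - 3 • α₃) (gv⁻¹ * gu * gv ^ 2 * gj) (gv⁻¹ * gu * gv * gj ^ 2) t₂ 1 :=
  edge_Vu_b_UvU.symm.trans edge_vU_b_UvUv.symm (gb_braid 2 1)

lemma edge_vv_b_Vu :
    Edge (-α₁ + 3 • α₂ - 3 • α₃) (gv ^ 2 * gj ^ 2) (gv⁻¹ * gu * gj ^ 6) 1 1 :=
  edge_VUv_b_v.symm.trans edge_Vuvv_b_Vuv (gb_braid 3 3)

lemma edge_Vuv_b_VU :
    Edge (2 • α₁ - 3 • α₂ + 4 • α₃) (gv⁻¹ * gu * gv * gj ^ 9) (gv⁻¹ * gu⁻¹) 1 t₁ :=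
  edge_vv_b_Vu.symm.trans edge_vU_b_UvUv (gb_braid 3 3)

lemma edge_vU_b_UvUV :
    Edge (α₁ - α₂) (gv * gu⁻¹ * gj ^ 4) (gu⁻¹ * gv * gu⁻¹ * gv⁻¹) t₂ 1 :=
  edge_Vuvv_b_uV.trans edge_a1 (gb_braid 1 3)

lemma edge_UvUv_b_UvUV :
    Edge (α₁ - α₂ + α₃) (gu⁻¹ * gv * gu⁻¹ * gv * gj ^ 11) (gu⁻¹ * gv * gu⁻¹ * gv⁻¹ * gj) t₂ 1 :=
  edge_vU_b_UvUV.trans edge_a3 (gb_square 3)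

lemma edge_UvUv_b_vUvv :
    Edge (3 • α₁ - 4 • α₂ + 5 • α₃) (gu⁻¹ * gv * gu⁻¹ * gv * gj ^ 5)
      (gv * gu⁻¹ * gv ^ 2 * gj ^ 4) t₂ t₁ :=
  edge_UvUv_b_UvUV.trans edge_Vuv_b_VU (gb_braid 2 1)

lemma three_smul_α₁_sub_two_smul_α₂_add_seven_smul_α₃ :
    3 • α₁ - 2 • α₂ + 7 • α₃ = 0 := by
  have h : Edge (-2 • α₂ - 2 • α₃) (gu⁻¹ * gv * gu⁻¹ * gv * gj ^ 5)
      (gv * gu⁻¹ * gv ^ 2 * gj ^ 4) t₂ t₁ :=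
    edge_VUv_b_v.trans edge_Uvv_b_j4 (gb_braid 0 2 2)
  calc 3 • α₁ - 2 • α₂ + 7 • α₃
      = (3 • α₁ - 4 • α₂ + 5 • α₃) - (-2 • α₂ - 2 • α₃) := by abel
    _ = 0 := sub_eq_zero.mpr (edge_UvUv_b_vUvv.class_unique h)

end CosetGraph

section AffineRepresentation

open Matrix

/-- `ℤ[τ]` with `τ² = τ - 1`, so that `τ` is a primitive sixth root of unity. -/
abbrev Eisenstein : Type := QuadraticAlgebra ℤ (-1) 1

/-- The affine map `x ↦ A x + w` as a matrix acting on column vectors with last entry `1`. -/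
def affineMatrix {m R : Type*} [Zero R] [One R] (A : Matrix m m R) (w : m → R) :
    Matrix (m ⊕ Unit) (m ⊕ Unit) R :=
  fromBlocks A (replicateCol Unit w) 0 1

/-- The image of `u` under the affine representation `rho`. The linear part of `rho` is the
seven-dimensional integral representation of the finite quotient `U₃(3)` of `G`, twisted by a
character of order three. -/
def uMatrix : Matrix (Fin 7 ⊕ Unit) (Fin 7 ⊕ Unit) Eisenstein :=
  affineMatrix ((⟨-1, 1⟩ : Eisenstein) • !![
    0, 0, 0, 1, 0, 0, 0;
    1, 0, 0, 1, 0, 1, 1;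
    -1, 0, 0, 0, 0, 0, 0;
    0, 0, -1, 0, 0, 0, 0;
    -1, 0, 1, -1, 0, 0, -1;
    0, -1, 0, -1, -1, -1, 0;
    0, 0, 0, 0, 1, 0, -1]) 0

/-- The image of `v` under the affine representation `rho`. -/
def vMatrix : Matrix (Fin 7 ⊕ Unit) (Fin 7 ⊕ Unit) Eisenstein :=
  affineMatrix !![
    0, 0, 0, 0, 0, 0, 1;
    0, 1, 0, 0, 1, 0, 0;
    0, -1, 0, 0, 0, 0, 0;
    0, 0, 0, 1, 0, 0, 0;
    0, -1, -1, 0, 0, 0, 0;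
    1, 0, 0, 0, 0, 0, -1;
    0, 0, 0, 0, 0, 1, 1] 0

/-- The image of `b` under the affine representation `rho`. The finite group `⟨u, v⟩` fixes the
origin, and the translation part of `b` then solves the linear equations imposed by the
relators. -/
def bMatrix : Matrix (Fin 7 ⊕ Unit) (Fin 7 ⊕ Unit) Eisenstein :=
  affineMatrix ((⟨-1, 1⟩ : Eisenstein) • !![
    0, 0, -1, 0, 0, 0, 0;
    0, -1, 0, -1, 0, 0, -1;
    1, 0, -1, 1, 0, 0, 0;
    0, 0, 0, 1, 0, 0, 0;
    0, 0, 0, 0, -1, -1, 0;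
    0, 0, 0, 0, 1, 0, 0;
    0, 1, 0, 0, 0, 0, 0])
    ![⟨-1, -1⟩, ⟨1, -1⟩, ⟨-1, 1⟩, ⟨1, 1⟩, 0, 0, ⟨-1, -1⟩]

lemma uMatrix_pow_three : uMatrix ^ 3 = 1 := by decide +kernel

lemma vMatrix_pow_four : vMatrix ^ 4 = 1 := by decide +kernel

lemma bMatrix_pow_three : bMatrix ^ 3 = 1 := by decide +kernel

/-- The matrices `uMatrix`, `vMatrix`, `bMatrix` as units. -/
def generatorImage : CSgen → (Matrix (Fin 7 ⊕ Unit) (Fin 7 ⊕ Unit) Eisenstein)ˣ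
  | .u => Units.ofPowEqOne uMatrix 3 uMatrix_pow_three three_ne_zero
  | .v => Units.ofPowEqOne vMatrix 4 vMatrix_pow_four four_ne_zero
  | .b => Units.ofPowEqOne bMatrix 3 bMatrix_pow_three three_ne_zero

lemma lift_generatorImage_eq_one : ∀ r ∈ csRels, FreeGroup.lift generatorImage r = 1 := by
  simp only [csRels, Set.mem_insert_iff, Set.mem_singleton_iff, forall_eq_or_imp, forall_eq,
    map_mul, map_pow, map_inv, FreeGroup.lift_apply_of, Units.ext_iff]
  decide +kernel

/-- An action of `G` on `ℤ[τ]⁷` by affine maps. -/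
def rho : CS →* (Matrix (Fin 7 ⊕ Unit) (Fin 7 ⊕ Unit) Eisenstein)ˣ :=
  PresentedGroup.toGroup lift_generatorImage_eq_one

lemma rho_gu : (rho gu).val = uMatrix :=
  congrArg Units.val (PresentedGroup.toGroup.of lift_generatorImage_eq_one)

lemma rho_gv : (rho gv).val = vMatrix :=
  congrArg Units.val (PresentedGroup.toGroup.of lift_generatorImage_eq_one)

lemma rho_gb : (rho gb).val = bMatrix :=
  congrArg Units.val (PresentedGroup.toGroup.of lift_generatorImage_eq_one)

/-- The linear functional `x ↦ x₀ + x₂ + x₅ + x₆` on `ℤ[τ]⁷`, as a matrix acting on column vectors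
with last entry `1`. The linear parts of the elements of `Π` preserve it. -/
def proj : Matrix (Unit ⊕ Unit) (Fin 7 ⊕ Unit) Eisenstein :=
  fromBlocks (replicateRow Unit ![1, 0, 1, 0, 0, 1, 1]) 0 0 1

/-- The translation `z ↦ z + c` of `ℤ[τ]`. -/
def translation (c : Eisenstein) : Matrix (Unit ⊕ Unit) (Unit ⊕ Unit) Eisenstein :=
  affineMatrix 1 fun _ => c

lemma translation_zero : translation 0 = 1 := by
  simp [translation, affineMatrix, ← Pi.zero_def]

lemma translation_add (c d : Eisenstein) :
    translation (c + d) = translation c * translation d := by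
  rw [translation, translation, translation, affineMatrix, affineMatrix, affineMatrix,
    fromBlocks_multiply]
  congr 1 <;> ext <;> simp [add_comm]

lemma translation_mul_proj_apply (c : Eisenstein) :
    (translation c * proj) (.inl ()) (.inr ()) = c := by
  simp [translation, proj, affineMatrix, fromBlocks_multiply]

lemma proj_mul_rho_a1 : proj * (rho a1).val = translation ⟨1, 3⟩ * proj := by
  simp only [a1, gv_inv, gj, pow_succ, pow_zero, one_mul, map_mul, Units.val_mul, rho_gu, rho_gv,
    rho_gb, ← Matrix.mul_assoc]
  decide +kernel

lemma proj_mul_rho_a2 : proj * (rho a2).val = translation ⟨-2, 1⟩ * proj := by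
  simp only [a2, gv_inv, gj, pow_succ, pow_zero, one_mul, map_mul, Units.val_mul, rho_gu, rho_gv,
    rho_gb, ← Matrix.mul_assoc]
  decide +kernel

lemma proj_mul_rho_a3 : proj * (rho a3).val = translation ⟨-1, -1⟩ * proj := by
  simp only [a3, gu_inv, gv_inv, gj, pow_succ, pow_zero, one_mul, map_mul, Units.val_mul, rho_gu,
    rho_gv, rho_gb, ← Matrix.mul_assoc]
  decide +kernel

end AffineRepresentation

section TranslationHom

lemma exists_proj_mul_rho_eq (p : PiGrp) :
    ∃ c, proj * (rho p).val = translation c * proj := by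
  obtain ⟨g, hg⟩ := p
  induction hg using Subgroup.closure_induction with
  | mem g hg =>
    rcases hg with rfl | rfl | rfl
    exacts [⟨_, proj_mul_rho_a1⟩, ⟨_, proj_mul_rho_a2⟩, ⟨_, proj_mul_rho_a3⟩]
  | one => exact ⟨0, by simp [translation_zero]⟩
  | mul g h _ _ hg hh =>
    obtain ⟨c, hc⟩ := hg
    obtain ⟨d, hd⟩ := hh
    refine ⟨c + d, ?_⟩
    rw [map_mul, Units.val_mul, ← Matrix.mul_assoc, hc, Matrix.mul_assoc, hd, translation_add,
      Matrix.mul_assoc]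
  | inv g _ hg =>
    obtain ⟨c, hc⟩ := hg
    refine ⟨-c, ?_⟩
    calc proj * (rho g⁻¹).val
        = translation (-c) * (translation c * proj) * (rho g⁻¹).val := by
          rw [← Matrix.mul_assoc, ← translation_add, neg_add_cancel, translation_zero,
            Matrix.one_mul]
      _ = translation (-c) * proj := by
          rw [← hc, map_inv, Matrix.mul_assoc, Matrix.mul_assoc, Units.mul_inv, Matrix.mul_one]

/-- The vector by which an element of `Π` translates the functional `proj`, in the basis `1, τ` of
`ℤ[τ]`. -/
def translationHom : PiGrp →* Multiplicative (ℤ × ℤ) where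
  toFun p :=
    let c := (proj * (rho p).val) (.inl ()) (.inr ())
    Multiplicative.ofAdd (c.re, c.im)
  map_one' := by simp [proj]
  map_mul' p q := by
    obtain ⟨c, hc⟩ := exists_proj_mul_rho_eq p
    obtain ⟨d, hd⟩ := exists_proj_mul_rho_eq q
    have hcd : proj * (rho ↑(p * q)).val = translation (c + d) * proj := by
      rw [Subgroup.coe_mul, map_mul, Units.val_mul, ← Matrix.mul_assoc, hc, Matrix.mul_assoc, hd,
        translation_add, Matrix.mul_assoc]
    simp only [hc, hd, hcd, translation_mul_proj_apply]
    rfl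

lemma translationHom_mk {g : CS} (hg : g ∈ PiGrp) {m n : ℤ}
    (h : proj * (rho g).val = translation ⟨m, n⟩ * proj) :
    translationHom ⟨g, hg⟩ = Multiplicative.ofAdd (m, n) := by
  simp only [translationHom, MonoidHom.coe_mk, OneHom.coe_mk, h, translation_mul_proj_apply]

lemma translationHom_a1 : translationHom ⟨a1, a1_mem⟩ = Multiplicative.ofAdd (1, 3) :=
  translationHom_mk a1_mem proj_mul_rho_a1

lemma translationHom_a2 : translationHom ⟨a2, a2_mem⟩ = Multiplicative.ofAdd (-2, 1) :=
  translationHom_mk a2_mem proj_mul_rho_a2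

lemma translationHom_a3 : translationHom ⟨a3, a3_mem⟩ = Multiplicative.ofAdd (-1, -1) :=
  translationHom_mk a3_mem proj_mul_rho_a3

lemma translationHom_a1_mul_a2_inv_mul_a3_sq :
    translationHom (⟨a1, a1_mem⟩ * (⟨a2, a2_mem⟩ : PiGrp)⁻¹ * (⟨a3, a3_mem⟩ : PiGrp) ^ 2) =
      Multiplicative.ofAdd (1, 0) := by
  rw [map_mul, map_mul, map_inv, map_pow, translationHom_a1, translationHom_a2, translationHom_a3]
  rfl

lemma translationHom_a1_inv_mul_a2_mul_a3_zpow :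
    translationHom
        ((⟨a1, a1_mem⟩ : PiGrp)⁻¹ * ⟨a2, a2_mem⟩ * (⟨a3, a3_mem⟩ : PiGrp) ^ (-3 : ℤ)) =
      Multiplicative.ofAdd (0, 1) := by
  rw [map_mul, map_mul, map_inv, map_zpow, translationHom_a1, translationHom_a2, translationHom_a3]
  rfl

lemma translationHom_surjective : Function.Surjective translationHom := by
  intro y
  refine ⟨(⟨a1, a1_mem⟩ * (⟨a2, a2_mem⟩ : PiGrp)⁻¹ * (⟨a3, a3_mem⟩ : PiGrp) ^ 2) ^ y.toAdd.1 *
    ((⟨a1, a1_mem⟩ : PiGrp)⁻¹ * ⟨a2, a2_mem⟩ * (⟨a3, a3_mem⟩ : PiGrp) ^ (-3 : ℤ)) ^ y.toAdd.2, ?_⟩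
  rw [map_mul, map_zpow, map_zpow, translationHom_a1_mul_a2_inv_mul_a3_sq,
    translationHom_a1_inv_mul_a2_mul_a3_zpow]
  apply Multiplicative.toAdd.injective
  ext <;> simp

lemma exists_abelianization_of_eq (p : PiGrp) :
    ∃ x y z : ℤ, Additive.ofMul (Abelianization.of p) = x • α₁ + y • α₂ + z • α₃ := by
  obtain ⟨g, hg⟩ := p
  induction hg using Subgroup.closure_induction with
  | mem g hg =>
    rcases hg with rfl | rfl | rfl
    exacts [⟨1, 0, 0, by simp [α₁]⟩, ⟨0, 1, 0, by simp [α₂]⟩, ⟨0, 0, 1, by simp [α₃]⟩]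
  | one =>
    refine ⟨0, 0, 0, ?_⟩
    change Additive.ofMul (Abelianization.of (1 : PiGrp)) = _
    simp
  | mul g h hg hh ihg ihh =>
    obtain ⟨x, y, z, hxyz⟩ := ihg
    obtain ⟨x', y', z', hxyz'⟩ := ihh
    refine ⟨x + x', y + y', z + z', ?_⟩
    rw [← MulMemClass.mk_mul_mk PiGrp g h hg hh, map_mul, ofMul_mul, hxyz, hxyz']
    module
  | inv g hg ih =>
    obtain ⟨x, y, z, hxyz⟩ := ih
    refine ⟨-x, -y, -z, ?_⟩
    change -Additive.ofMul (Abelianization.of (⟨g, hg⟩ : PiGrp)) = _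
    rw [hxyz]
    module

lemma ker_translationHom : translationHom.ker = commutator PiGrp := by
  refine le_antisymm (fun p hp => ?_) (Abelianization.commutator_subset_ker translationHom)
  obtain ⟨x, y, z, hxyz⟩ := exists_abelianization_of_eq p
  have hvalue : x • ((1, 3) : ℤ × ℤ) + y • (-2, 1) + z • (-1, -1) = 0 := by
    have h := congr((Abelianization.lift translationHom).toAdditiveLeft $hxyz)
    simpa [α₁, α₂, α₃, translationHom_a1, translationHom_a2, translationHom_a3,
      MonoidHom.mem_ker.mp hp] using h.symm
  have hclass : x • α₁ + y • α₂ + z • α₃ = 0 := by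
    obtain ⟨n, rfl, rfl, rfl⟩ : ∃ n, x = 3 * n ∧ y = -2 * n ∧ z = 7 * n := by
      simp only [Prod.smul_mk, Int.zsmul_eq_mul, mul_one, Int.reduceNeg, mul_neg, Prod.mk_add_mk,
        Prod.ext_iff, Prod.fst_zero, Prod.snd_zero] at hvalue
      exact ⟨x + y, by omega, by omega, by omega⟩
    calc (3 * n) • α₁ + (-2 * n) • α₂ + (7 * n) • α₃
        = n • (3 • α₁ - 2 • α₂ + 7 • α₃) := by module
      _ = 0 := by rw [three_smul_α₁_sub_two_smul_α₂_add_seven_smul_α₃, smul_zero]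
  rw [← Abelianization.ker_of]
  exact hxyz.trans hclass

lemma a1_pow_mul_a2_zpow_mul_a3_pow_mem_commutator :
    (⟨a1, a1_mem⟩ : PiGrp) ^ 3 * (⟨a2, a2_mem⟩ : PiGrp) ^ (-2 : ℤ) * (⟨a3, a3_mem⟩ : PiGrp) ^ 7 ∈
      commutator PiGrp := by
  rw [← ker_translationHom, MonoidHom.mem_ker, map_mul, map_mul, map_pow, map_zpow, map_pow,
    translationHom_a1, translationHom_a2, translationHom_a3]
  rfl

end TranslationHom

end CartwrightSteger

/-- there is a homomorphism `f : Π → ℤ²` inducing an isomorphism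
`Π/[Π,Π] → ℤ²` with `f(a₁) = (1,3)`, `f(a₂) = (−2,1)`, `f(a₃) = (−1,−1)`;
in particular `a₁³a₂⁻²a₃⁷ ∈ [Π,Π]`, `f(a₁a₂⁻¹a₃²) = (1,0)` and
`f(a₁⁻¹a₂a₃⁻³) = (0,1)`. -/
theorem stmt_6 :
    ∃ f : ↥PiGrp →* Multiplicative (ℤ × ℤ),
      Function.Surjective f ∧
      f.ker = commutator ↥PiGrp ∧
      f ⟨a1, a1_mem⟩ = Multiplicative.ofAdd (1, 3) ∧
      f ⟨a2, a2_mem⟩ = Multiplicative.ofAdd (-2, 1) ∧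
      f ⟨a3, a3_mem⟩ = Multiplicative.ofAdd (-1, -1) ∧
      (⟨a1, a1_mem⟩ : ↥PiGrp) ^ 3 * (⟨a2, a2_mem⟩ : ↥PiGrp) ^ (-2 : ℤ)
          * (⟨a3, a3_mem⟩ : ↥PiGrp) ^ 7 ∈ commutator ↥PiGrp ∧
      f (⟨a1, a1_mem⟩ * (⟨a2, a2_mem⟩ : ↥PiGrp)⁻¹ * (⟨a3, a3_mem⟩ : ↥PiGrp) ^ 2)
          = Multiplicative.ofAdd (1, 0) ∧
      f ((⟨a1, a1_mem⟩ : ↥PiGrp)⁻¹ * ⟨a2, a2_mem⟩ * (⟨a3, a3_mem⟩ : ↥PiGrp) ^ (-3 : ℤ))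
          = Multiplicative.ofAdd (0, 1) := by
  open CartwrightSteger in
  exact ⟨translationHom, translationHom_surjective, ker_translationHom, translationHom_a1,
    translationHom_a2, translationHom_a3, a1_pow_mul_a2_zpow_mul_a3_pow_mem_commutator,
    translationHom_a1_mul_a2_inv_mul_a3_sq, translationHom_a1_inv_mul_a2_mul_a3_zpow⟩
end
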